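/- arXiv:2106.00453 — 8 statements merged into one kernel-verified Lean document; each statement's English description precedes it below -/
import Mathlib

section
/- Let f be a probability density function on ℝ^m such that ∫ f^q < ∞ for all q in some punctured neighbourhood of 1 and such that f log f is integrable. Then H_q(f) → H_1(f) = -∫ f(x) log f(x) dx as q → 1. -/
open MeasureTheory Real Filter Topology

/-!
Put `F q = ∫ f ^ q`. Since `F 1 = 1`, the Rényi entropy is minus the slope of `log ∘ F` between
`1` and `q`, so the claim is that `F` has derivative `∫ f log f` at `1`. The difference quotients
`(f ^ q - f) / (q - 1)` converge pointwise to `f log f`. For `y > 0`, the map `q ↦ y ^ q` is convex,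
so its secant slopes at `1` increase with `q`: on `(a, b) ∋ 1` they lie between the
slopes at `a` and at `b`. Choosing `a` and `b` with `f ^ a` and `f ^ b` integrable gives an
integrable majorant, and dominated convergence applies.
-/

/-- Convexity of `q ↦ y ^ q` bounds the difference quotient at `1` by those at the endpoints; the
case `y = 0` needs `0 < a`, as `0 ^ 0 = 1`. -/
lemma abs_slope_rpow_le {y a b q : ℝ} (hy : 0 ≤ y) (ha0 : 0 < a) (ha : a < 1) (hb : 1 < b)
    (haq : a < q) (hqb : q < b) (hq : q ≠ 1) :
    |(y ^ q - y) / (q - 1)| ≤ |(y ^ a - y) / (a - 1)| + |(y ^ b - y) / (b - 1)| := by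
  rcases hy.eq_or_lt with rfl | hy
  · rw [zero_rpow (ha0.trans haq).ne']
    simp only [sub_self, zero_div, abs_zero]
    positivity
  · have hc := convexOn_rpow_left hy
    have h1 := hc.secant_mono (Set.mem_univ 1) (Set.mem_univ a) (Set.mem_univ q) ha.ne hq haq.le
    have h2 := hc.secant_mono (Set.mem_univ 1) (Set.mem_univ q) (Set.mem_univ b) hq hb.ne' hqb.le
    simp only [rpow_one] at h1 h2
    rw [abs_le]
    constructor
    · linarith [neg_abs_le ((y ^ a - y) / (a - 1)), abs_nonneg ((y ^ b - y) / (b - 1))]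
    · linarith [le_abs_self ((y ^ b - y) / (b - 1)), abs_nonneg ((y ^ a - y) / (a - 1))]

lemma tendsto_slope_rpow {y : ℝ} (hy : 0 ≤ y) :
    Tendsto (fun q : ℝ => (y ^ q - y) / (q - 1)) (𝓝[≠] 1) (𝓝 (y * Real.log y)) := by
  rcases hy.eq_or_lt with rfl | hy
  · have h0 : ∀ᶠ q : ℝ in 𝓝[≠] 1, 0 < q :=
      eventually_nhdsWithin_of_eventually_nhds (eventually_gt_nhds one_pos)
    rw [zero_mul]
    refine tendsto_const_nhds.congr' ?_
    filter_upwards [h0] with q hq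
    simp [zero_rpow hq.ne']
  · have h := (Real.hasStrictDerivAt_const_rpow hy 1).hasDerivAt
    rw [hasDerivAt_iff_tendsto_slope] at h
    simpa only [slope_fun_def_field, rpow_one] using h

/-- **Limit of Rényi entropy as `q → 1`.**
Let `f` be a probability density on `ℝ^m` such that `∫ f^q < ∞` for all `q` in some
punctured neighbourhood of `1`, and such that `f · log f` is integrable.  Then
`H_q(f) = (1/(1-q)) log ∫ f^q` converges to the differential entropy
`H_1(f) = -∫ f log f` as `q → 1` (through `q ≠ 1`). -/
theorem renyi_entropy_tendsto_shannon
    (m : ℕ) (f : EuclideanSpace ℝ (Fin m) → ℝ)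
    (hf_meas : Measurable f) (hf_nonneg : ∀ x, 0 ≤ f x)
    (hf_prob : ∫ x, f x = 1) (hf_int : Integrable f)
    (hq_int : ∀ᶠ q in nhdsWithin (1 : ℝ) {1}ᶜ, Integrable (fun x => f x ^ q))
    (hflogf : Integrable (fun x => f x * Real.log (f x))) :
    Tendsto (fun q : ℝ => (1 / (1 - q)) * Real.log (∫ x, f x ^ q))
      (nhdsWithin (1 : ℝ) {1}ᶜ)
      (nhds (-∫ x, f x * Real.log (f x))) := by
  obtain ⟨a, haI, ha0, ha⟩ :
      ∃ a : ℝ, Integrable (fun x => f x ^ a) ∧ 0 < a ∧ a < 1 := by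
    have h1 : ∀ᶠ q in 𝓝[<] (1 : ℝ), Integrable (fun x => f x ^ q) :=
      hq_int.filter_mono (nhdsWithin_mono _ fun x hx => ne_of_lt hx)
    have h2 : ∀ᶠ q in 𝓝[<] (1 : ℝ), 0 < q :=
      eventually_nhdsWithin_of_eventually_nhds (eventually_gt_nhds one_pos)
    exact (h1.and (h2.and self_mem_nhdsWithin)).exists
  obtain ⟨b, hbI, hb⟩ : ∃ b : ℝ, Integrable (fun x => f x ^ b) ∧ 1 < b := by
    have h1 : ∀ᶠ q in 𝓝[>] (1 : ℝ), Integrable (fun x => f x ^ q) :=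
      hq_int.filter_mono (nhdsWithin_mono _ fun x hx => ne_of_gt hx)
    exact (h1.and self_mem_nhdsWithin).exists
  have hlim : Tendsto (fun q : ℝ => ∫ x, (f x ^ q - f x) / (q - 1)) (𝓝[≠] 1)
      (𝓝 (∫ x, f x * Real.log (f x))) := by
    refine tendsto_integral_filter_of_dominated_convergence
      (fun x => |(f x ^ a - f x) / (a - 1)| + |(f x ^ b - f x) / (b - 1)|) ?_ ?_ ?_ ?_
    · exact Eventually.of_forall fun q =>
        (((hf_meas.pow_const q).sub hf_meas).div_const _).aestronglyMeasurable
    · filter_upwards [self_mem_nhdsWithin,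
        eventually_nhdsWithin_of_eventually_nhds (eventually_gt_nhds ha),
        eventually_nhdsWithin_of_eventually_nhds (eventually_lt_nhds hb)] with q hq haq hqb
      exact Eventually.of_forall fun x =>
        abs_slope_rpow_le (hf_nonneg x) ha0 ha hb haq hqb hq
    · exact ((haI.sub hf_int).div_const _).abs.add ((hbI.sub hf_int).div_const _).abs
    · exact Eventually.of_forall fun x => tendsto_slope_rpow (hf_nonneg x)
  have hF1 : ∫ x, f x ^ (1 : ℝ) = 1 := by simpa only [rpow_one] using hf_prob
  have hderiv : HasDerivAt (fun q : ℝ => ∫ x, f x ^ q) (∫ x, f x * Real.log (f x)) 1 := by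
    rw [hasDerivAt_iff_tendsto_slope]
    refine hlim.congr' ?_
    filter_upwards [hq_int] with q hq
    rw [slope_def_field, integral_div, integral_sub hq hf_int, hF1, hf_prob]
  have hlog := hderiv.log (by rw [hF1]; exact one_ne_zero)
  rw [hF1, div_one, hasDerivAt_iff_tendsto_slope] at hlog
  refine hlog.neg.congr fun q => ?_
  rw [slope_def_field, hF1, Real.log_one, sub_zero, ← neg_sub q 1, one_div, inv_neg]
  ring
end

section
/- For the multivariate Student density f^S_{a,Σ,ν} on ℝ^m with ν > 0, and any q with m/(ν+m) < q, q ≠ 1 (so that q(ν+m)/2 − m/2 > 0), the Rényi entropy satisfies H_q(f^S_{a,Σ,ν}) = (1/2) log det Σ + c'_S(m,q,ν), where c'_S(m,q,ν) = (1/(1−q)) log[ B(q(ν+m)/2 − m/2, m/2) / B(ν/2, m/2)^q ] + (m/2) log(πν) − log Γ(m/2), and B denotes the Beta function. -/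
/-!
The whole computation rests on `∫ (1 + c‖y‖²)^(-p) dy = (π/c)^(m/2) Γ(p - m/2) / Γ(p)` on `ℝ^m`
for `p > m/2` (`integral_one_add_mul_norm_sq_rpow`). It is obtained by writing the power as a Gamma
integral `Γ(p)⁻¹ ∫ s^(p-1) exp(-(1 + c‖y‖²)s) ds`, exchanging the integrals, and evaluating the
Gaussian integral in `y` and then the remaining Gamma integral in `s`.

Factoring `S⁻¹ = Bᵀ B` turns the Mahalanobis form into `‖B (x - a)‖²`, so a linear change of
variables of Jacobian `|det B|⁻¹ = √(det S)` reduces the integral of the `q`-th power of the Student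
density to this formula with `c = 1/ν` and `p = q(ν+m)/2`. Taking logarithms gives the entropy.
-/

open MeasureTheory Real Matrix

/-- The Mahalanobis quadratic form `(x−a)ᵀ S⁻¹ (x−a)`. -/
noncomputable def mahalanobis (m : ℕ) (S : Matrix (Fin m) (Fin m) ℝ)
    (a x : EuclideanSpace ℝ (Fin m)) : ℝ :=
  (fun i => x i - a i) ⬝ᵥ (S⁻¹ *ᵥ (fun i => x i - a i))

/-- Normalizing constant of the multivariate Student density:
`c_S(m,ν) = Γ((ν+m)/2) / ((πν)^{m/2} Γ(ν/2))`. -/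
noncomputable def studentConst (m : ℕ) (ν : ℝ) : ℝ :=
  Real.Gamma ((ν + m) / 2) / ((π * ν) ^ ((m : ℝ) / 2) * Real.Gamma (ν / 2))

/-- The multivariate Student density
`f^S_{a,S,ν}(x) = c_S(m,ν) (det S)^{-1/2} (1 + (1/ν)(x−a)ᵀ S⁻¹ (x−a))^{−(ν+m)/2}`. -/
noncomputable def studentPdf (m : ℕ) (a : EuclideanSpace ℝ (Fin m))
    (S : Matrix (Fin m) (Fin m) ℝ) (ν : ℝ) (x : EuclideanSpace ℝ (Fin m)) : ℝ :=
  studentConst m ν * S.det ^ (-(1 : ℝ) / 2) *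
    (1 + (1 / ν) * mahalanobis m S a x) ^ (-(ν + m) / 2)

/-- The Beta function `B(a,b) = Γ(a)Γ(b)/Γ(a+b)`. -/
noncomputable def realBeta (a b : ℝ) : ℝ :=
  Real.Gamma a * Real.Gamma b / Real.Gamma (a + b)

/-- The integral of a multivariate Student kernel with identity scale matrix; the condition
`m/2 < p` is what makes it converge. -/
lemma integral_one_add_mul_norm_sq_rpow (m : ℕ) (c p : ℝ) (hc : 0 < c) (hp : (m : ℝ) / 2 < p) :
    ∫ y : EuclideanSpace ℝ (Fin m), (1 + c * ‖y‖ ^ 2) ^ (-p) =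
      (π / c) ^ ((m : ℝ) / 2) * (Gamma (p - m / 2) / Gamma p) := by
  have hp0 : 0 < p := lt_of_le_of_lt (by positivity) hp
  have hG : 0 < Gamma p := Gamma_pos_of_pos hp0
  let F : EuclideanSpace ℝ (Fin m) → ℝ → ℝ := fun y s =>
    s ^ (p - 1) * exp (-((1 + c * ‖y‖ ^ 2) * s))
  -- Integrating out `s` gives a Gamma integral.
  have inner_s : ∀ y, ∫ s in Set.Ioi (0 : ℝ), F y s = (1 + c * ‖y‖ ^ 2) ^ (-p) * Gamma p := by
    intro y
    have h1 : 0 < 1 + c * ‖y‖ ^ 2 := by positivity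
    rw [integral_rpow_mul_exp_neg_mul_Ioi hp0 h1, one_div, inv_rpow h1.le, rpow_neg h1.le]
  have F_eq : ∀ y s, F y s = (s ^ (p - 1) * exp (-s)) * exp (-(c * s) * ‖y‖ ^ 2) := by
    intro y s
    simp only [F]
    rw [mul_assoc, ← exp_add]
    ring_nf
  -- Integrating out `y` gives a Gaussian integral.
  have gauss : ∀ s : ℝ, 0 < s → ∫ y : EuclideanSpace ℝ (Fin m), exp (-(c * s) * ‖y‖ ^ 2) =
      (π / (c * s)) ^ ((m : ℝ) / 2) := by
    intro s hs
    rw [GaussianFourier.integral_rexp_neg_mul_sq_norm (mul_pos hc hs)]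
    simp
  have inner_y : ∀ s : ℝ, 0 < s → ∫ y, F y s =
      (π / c) ^ ((m : ℝ) / 2) * (exp (-s) * s ^ (p - m / 2 - 1)) := by
    intro s hs
    simp_rw [F_eq]
    rw [integral_const_mul, gauss s hs, ← div_div, div_rpow (by positivity) hs.le,
      show p - (m : ℝ) / 2 - 1 = (p - 1) - m / 2 by ring, rpow_sub hs (p - 1)]
    ring
  have meas : Measurable (Function.uncurry F) := by
    simp only [F, Function.uncurry_def]
    fun_prop
  have int : Integrable (Function.uncurry F)
      ((volume : Measure (EuclideanSpace ℝ (Fin m))).prod (volume.restrict (Set.Ioi (0 : ℝ)))) := by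
    rw [integrable_prod_iff' meas.aestronglyMeasurable]
    constructor
    · filter_upwards [ae_restrict_mem measurableSet_Ioi] with s hs
      simp only [Function.uncurry_apply_pair, F_eq]
      refine Integrable.const_mul (Integrable.of_integral_ne_zero ?_) _
      have hs' : 0 < s := hs
      rw [gauss s hs']
      positivity
    · have key : IntegrableOn
          (fun s : ℝ => (π / c) ^ ((m : ℝ) / 2) * (exp (-s) * s ^ (p - m / 2 - 1))) (Set.Ioi 0) :=
        (GammaIntegral_convergent (sub_pos.2 hp)).const_mul _
      refine key.congr_fun_ae ?_
      filter_upwards [ae_restrict_mem measurableSet_Ioi] with s hs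
      have hs' : 0 < s := hs
      rw [← inner_y s hs']
      refine integral_congr_ae (.of_forall fun y => ?_)
      simp only [Function.uncurry_apply_pair]
      rw [norm_of_nonneg]
      simp only [F]
      positivity
  have swap := integral_integral_swap int
  simp_rw [inner_s] at swap
  rw [integral_mul_const, setIntegral_congr_fun measurableSet_Ioi (fun s hs => inner_y s hs),
    integral_const_mul, ← Gamma_eq_integral (sub_pos.2 hp)] at swap
  rw [← mul_div_assoc, ← swap, mul_div_cancel_right₀ _ hG.ne']

lemma integral_comp_mulVec_sub (m : ℕ) (a : EuclideanSpace ℝ (Fin m))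
    (B : Matrix (Fin m) (Fin m) ℝ) (hB : B.det ≠ 0) (g : EuclideanSpace ℝ (Fin m) → ℝ)
    (hg : Continuous g) :
    ∫ x, g (toEuclideanLin B (x - a)) = |B.det|⁻¹ * ∫ y, g y := by
  rw [integral_sub_right_eq_self (fun x => g (toEuclideanLin B x)) a]
  have hdet : LinearMap.det (toEuclideanLin B) ≠ 0 := by rwa [LinearMap.det_toLpLin]
  rw [← integral_map (f := g) (φ := toEuclideanLin B)
    (LinearMap.continuous_of_finiteDimensional _).aemeasurable hg.aestronglyMeasurable,
    Measure.map_linearMap_addHaar_eq_smul_addHaar _ hdet, integral_smul_measure,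
    LinearMap.det_toLpLin, ENNReal.toReal_ofReal (abs_nonneg _), abs_inv, smul_eq_mul]

/-- Whitening: the Mahalanobis form is a squared Euclidean norm after a linear map. -/
lemma exists_mahalanobis_eq_norm_sq (m : ℕ) (S : Matrix (Fin m) (Fin m) ℝ) (hS : S.PosDef) :
    ∃ B : Matrix (Fin m) (Fin m) ℝ, B.det ^ 2 = S.det⁻¹ ∧
      ∀ a x, mahalanobis m S a x = ‖toEuclideanLin B (x - a)‖ ^ 2 := by
  obtain ⟨B, hB⟩ : ∃ B : Matrix (Fin m) (Fin m) ℝ, S⁻¹ = Bᴴ * B := by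
    open scoped MatrixOrder in
    exact CStarAlgebra.nonneg_iff_eq_star_mul_self.1 hS.inv.posSemidef.nonneg
  rw [conjTranspose_eq_transpose_of_trivial] at hB
  refine ⟨B, ?_, fun a x => ?_⟩
  · have h := congrArg Matrix.det hB
    rw [det_nonsing_inv, Ring.inverse_eq_inv', det_mul, det_transpose] at h
    rw [h, sq]
  · have hv : (fun i => x i - a i) = (x - a).ofLp := rfl
    rw [mahalanobis, hv, hB, ← mulVec_mulVec, dotProduct_mulVec, vecMul_transpose,
      EuclideanSpace.real_norm_sq_eq]
    simp [dotProduct, toLpLin_apply, sq]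

lemma integral_studentPdf_rpow (m : ℕ) (a : EuclideanSpace ℝ (Fin m))
    (S : Matrix (Fin m) (Fin m) ℝ) (hS : S.PosDef) (ν : ℝ) (hν : 0 < ν) (q : ℝ)
    (hq : (m : ℝ) / 2 < q * ((ν + m) / 2)) :
    ∫ x, studentPdf m a S ν x ^ q =
      (studentConst m ν * S.det ^ (-(1 : ℝ) / 2)) ^ q * (S.det ^ ((1 : ℝ) / 2) *
        ((π * ν) ^ ((m : ℝ) / 2) *
          (Gamma (q * ((ν + m) / 2) - m / 2) / Gamma (q * ((ν + m) / 2))))) := by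
  obtain ⟨B, hdet, hB⟩ := exists_mahalanobis_eq_norm_sq m S hS
  have hS0 : 0 < S.det := hS.det_pos
  have hc : 0 ≤ studentConst m ν := by
    have h1 := Gamma_pos_of_pos (show 0 < (ν + m) / 2 by positivity)
    have h2 := Gamma_pos_of_pos (show 0 < ν / 2 by positivity)
    unfold studentConst
    positivity
  have hB0 : B.det ≠ 0 := by
    intro h
    rw [h] at hdet
    exact (inv_pos.2 hS0).ne (by simpa using hdet)
  have hjac : |B.det|⁻¹ = S.det ^ ((1 : ℝ) / 2) := by
    rw [← sqrt_sq_eq_abs, hdet, sqrt_inv, inv_inv, sqrt_eq_rpow]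
  have hpt : ∀ x, studentPdf m a S ν x ^ q =
      (studentConst m ν * S.det ^ (-(1 : ℝ) / 2)) ^ q *
        (fun y : EuclideanSpace ℝ (Fin m) =>
          (1 + 1 / ν * ‖y‖ ^ 2) ^ (-(q * ((ν + m) / 2)))) (toEuclideanLin B (x - a)) := by
    intro x
    have h1 : 0 ≤ 1 + 1 / ν * ‖toEuclideanLin B (x - a)‖ ^ 2 := by positivity
    rw [studentPdf, hB, mul_rpow (by positivity) (by positivity), ← rpow_mul h1]
    ring_nf
  have hcont : Continuous fun y : EuclideanSpace ℝ (Fin m) =>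
      (1 + 1 / ν * ‖y‖ ^ 2) ^ (-(q * ((ν + m) / 2))) := by
    refine Continuous.rpow_const (by fun_prop) fun y => Or.inl ?_
    positivity
  simp_rw [hpt]
  rw [integral_const_mul, integral_comp_mulVec_sub m a B hB0 _ hcont, hjac,
    integral_one_add_mul_norm_sq_rpow m (1 / ν) _ (by positivity) hq, div_div_eq_mul_div, div_one]

/-- **Rényi entropy of the multivariate Student distribution.**
For `ν > 0` and `q > m/(ν+m)` with `q ≠ 1`,
`H_q(f^S_{a,Σ,ν}) = (1/2) log det Σ + c'_S(m,q,ν)` where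
`c'_S(m,q,ν) = (1/(1−q)) log[B(q(ν+m)/2 − m/2, m/2) / B(ν/2, m/2)^q]
  + (m/2) log(πν) − log Γ(m/2)`. -/
theorem renyi_entropy_student
    (m : ℕ) (hm : 1 ≤ m) (a : EuclideanSpace ℝ (Fin m))
    (S : Matrix (Fin m) (Fin m) ℝ) (hS : S.PosDef)
    (ν : ℝ) (hν : 0 < ν)
    (q : ℝ) (hq : (m : ℝ) / (ν + m) < q) (hq_ne : q ≠ 1) :
    (1 / (1 - q)) * Real.log (∫ x, studentPdf m a S ν x ^ q) =
      (1 / 2) * Real.log S.det +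
        ((1 / (1 - q)) *
            Real.log (realBeta (q * ((ν + m) / 2) - m / 2) (m / 2) /
              realBeta (ν / 2) (m / 2) ^ q) +
          ((m : ℝ) / 2) * Real.log (π * ν) - Real.log (Real.Gamma (m / 2))) := by
  have hm0 : (0 : ℝ) < m := by exact_mod_cast hm
  have hp : (m : ℝ) / 2 < q * ((ν + m) / 2) := by
    rw [div_lt_iff₀ (by positivity)] at hq
    linarith
  have hS0 : 0 < S.det := hS.det_pos
  have g1 : 0 < Gamma ((ν + m) / 2) := Gamma_pos_of_pos (by positivity)
  have g2 : 0 < Gamma (ν / 2) := Gamma_pos_of_pos (by positivity)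
  have g3 : 0 < Gamma ((m : ℝ) / 2) := Gamma_pos_of_pos (by positivity)
  have g4 : 0 < Gamma (q * ((ν + m) / 2) - m / 2) := Gamma_pos_of_pos (sub_pos.2 hp)
  have g5 : 0 < Gamma (q * ((ν + m) / 2)) := Gamma_pos_of_pos (lt_trans (by positivity) hp)
  have hP : 0 < (π * ν) ^ ((m : ℝ) / 2) := by positivity
  have hC : 0 < studentConst m ν := by
    unfold studentConst
    positivity
  have logC : log (studentConst m ν) =
      log (Gamma ((ν + m) / 2)) - (m / 2 * log (π * ν) + log (Gamma (ν / 2))) := by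
    rw [studentConst, log_div g1.ne' (by positivity), log_mul hP.ne' g2.ne',
      log_rpow (by positivity)]
  have logI : log (∫ x, studentPdf m a S ν x ^ q) =
      q * (log (studentConst m ν) + -1 / 2 * log S.det) + (1 / 2 * log S.det +
        (m / 2 * log (π * ν) + (log (Gamma (q * ((ν + m) / 2) - m / 2)) -
          log (Gamma (q * ((ν + m) / 2)))))) := by
    have d1 : 0 < S.det ^ (-(1 : ℝ) / 2) := by positivity
    have d2 : 0 < S.det ^ ((1 : ℝ) / 2) := by positivity
    rw [integral_studentPdf_rpow m a S hS ν hν q hp, log_mul (by positivity) (by positivity),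
      log_rpow (by positivity), log_mul hC.ne' d1.ne', log_rpow hS0,
      log_mul d2.ne' (by positivity), log_rpow hS0, log_mul hP.ne' (by positivity),
      log_rpow (by positivity), log_div g4.ne' g5.ne']
  have hb1 : 0 < realBeta (q * ((ν + m) / 2) - m / 2) (m / 2) := by
    rw [realBeta, sub_add_cancel]
    positivity
  have hb2 : 0 < realBeta (ν / 2) (m / 2) := by
    rw [realBeta, ← add_div]
    positivity
  have logB : log (realBeta (q * ((ν + m) / 2) - m / 2) (m / 2) / realBeta (ν / 2) (m / 2) ^ q) =
      log (Gamma (q * ((ν + m) / 2) - m / 2)) + log (Gamma (m / 2)) -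
        log (Gamma (q * ((ν + m) / 2))) -
        q * (log (Gamma (ν / 2)) + log (Gamma (m / 2)) - log (Gamma ((ν + m) / 2))) := by
    rw [log_div hb1.ne' (by positivity), log_rpow hb2, realBeta, realBeta, sub_add_cancel,
      ← add_div, log_div (by positivity) g5.ne', log_mul g4.ne' g3.ne',
      log_div (by positivity) g1.ne', log_mul g2.ne' g3.ne']
  have hq1 : 1 - q ≠ 0 := sub_ne_zero.2 hq_ne.symm
  rw [logI, logB, logC]
  field_simp
  ring
end

section
/- For the multivariate Pearson Type II density f^P_{a,Σ,γ} on ℝ^m with γ > 0, and any q > 0 with q ≠ 1 and qγ + 1 > 0, the Rényi entropy satisfies H_q(f^P_{a,Σ,γ}) = (1/2) log det Σ + c'_P(m,q,γ), where c'_P(m,q,γ) = (1/(1−q)) log[ B(qγ+1, m/2) / B(γ+1, m/2)^q ] + (m/2) log π − log Γ(m/2), and B denotes the Beta function. -/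
/-!
An affine change of variables that whitens `S` turns `∫ f^q` into `(det S)^{1/2}` times a radial
integral over the Euclidean unit ball (`integral_comp_mahalanobis`). Polar coordinates and the
substitution `y = ‖x‖²` evaluate this radial integral as
`π^{m/2} / Γ(m/2) · B(qγ + 1, m/2)` (`integral_posPart_norm`). Since
`c_P(m,γ) = Γ(m/2) / (π^{m/2} B(γ + 1, m/2))`, taking logarithms gives the formula.
-/

open MeasureTheory Real Matrix

/-- Normalizing constant of the multivariate Pearson Type II density:
`c_P(m,γ) = Γ(m/2 + γ + 1) / (π^{m/2} Γ(γ+1))`. -/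
noncomputable def pearsonConst (m : ℕ) (γ : ℝ) : ℝ :=
  Real.Gamma ((m : ℝ) / 2 + γ + 1) / (π ^ ((m : ℝ) / 2) * Real.Gamma (γ + 1))

/-- The multivariate Pearson Type II density
`f^P_{a,S,γ}(x) = c_P(m,γ) (det S)^{-1/2} [1 − (x−a)ᵀ S⁻¹ (x−a)]₊^γ`. -/
noncomputable def pearsonPdf (m : ℕ) (a : EuclideanSpace ℝ (Fin m))
    (S : Matrix (Fin m) (Fin m) ℝ) (γ : ℝ) (x : EuclideanSpace ℝ (Fin m)) : ℝ :=
  pearsonConst m γ * S.det ^ (-(1 : ℝ) / 2) *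
    (max (1 - mahalanobis m S a x) 0) ^ γ

/-- The Beta integral, with the upper end point `1` encoded by the positive part. -/
lemma integral_rpow_mul_posPart_rpow {α β : ℝ} (hα : 0 < α) (hβ : 0 < β) :
    ∫ y in Set.Ioi (0 : ℝ), y ^ (α - 1) * (max (1 - y) 0) ^ β = realBeta (β + 1) α := by
  have h1 : ∫ y in Set.Ioi (0 : ℝ), y ^ (α - 1) * (max (1 - y) 0) ^ β
      = ∫ y in Set.Ioc (0 : ℝ) 1, y ^ (α - 1) * (max (1 - y) 0) ^ β := by
    refine (setIntegral_eq_of_subset_of_forall_sdiff_eq_zero measurableSet_Ioi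
      Set.Ioc_subset_Ioi_self fun y hy => ?_)
    have hy1 : 1 < y := by
      by_contra! h
      exact hy.2 ⟨hy.1, h⟩
    rw [max_eq_right (by linarith), zero_rpow hβ.ne', mul_zero]
  have hB : realBeta (β + 1) α = ProbabilityTheory.beta α (β + 1) := by
    unfold realBeta ProbabilityTheory.beta
    rw [mul_comm, add_comm (β + 1) α]
  rw [h1, hB, ProbabilityTheory.beta_eq_betaIntegralReal α (β + 1) hα (by linarith),
    Complex.betaIntegral, intervalIntegral.integral_of_le (by norm_num),
    ← RCLike.re_to_complex, ← integral_re]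
  · refine setIntegral_congr_fun measurableSet_Ioc fun x ⟨hx1, hx₂⟩ => ?_
    have h0 : 0 ≤ 1 - x := by linarith
    simp only [max_eq_left h0]
    norm_cast
    rw [← Complex.ofReal_cpow hx1.le, ← Complex.ofReal_cpow h0, RCLike.re_to_complex,
      Complex.re_mul_ofReal, Complex.ofReal_re, add_sub_cancel_right]
  · have := Complex.betaIntegral_convergent (u := α) (v := (β + 1 : ℝ)) (by simpa)
      (by simp; linarith)
    rwa [intervalIntegrable_iff_integrableOn_Ioc_of_le (by simp)] at this

/-- Polar coordinates followed by the substitution `y = ‖x‖²` reduce the integral over the unit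
ball to a Beta integral. -/
lemma integral_posPart_norm (m : ℕ) (hm : 1 ≤ m) {β : ℝ} (hβ : 0 < β) :
    ∫ x : EuclideanSpace ℝ (Fin m), (max (1 - ‖x‖ ^ 2) 0) ^ β
      = π ^ ((m : ℝ) / 2) / Real.Gamma (m / 2) * realBeta (β + 1) (m / 2) := by
  have : Nonempty (Fin m) := ⟨⟨0, hm⟩⟩
  have hm0 : (0 : ℝ) < m := by exact_mod_cast hm
  have hball : volume.real (Metric.ball (0 : EuclideanSpace ℝ (Fin m)) 1)
      = π ^ ((m : ℝ) / 2) / (m / 2 * Real.Gamma (m / 2)) := by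
    rw [Measure.real, EuclideanSpace.volume_ball, ← Real.Gamma_add_one (by positivity)]
    have : √π ^ m = π ^ ((m : ℝ) / 2) := by
      rw [Real.sqrt_eq_rpow, ← Real.rpow_natCast, ← Real.rpow_mul pi_pos.le]
      congr 1
      ring
    have hG : 0 < Real.Gamma ((m : ℝ) / 2 + 1) := Real.Gamma_pos_of_pos (by positivity)
    simp [this]
    positivity
  have hrad : ∫ y in Set.Ioi (0 : ℝ), y ^ (m - 1) • (max (1 - y ^ 2) 0) ^ β
      = realBeta (β + 1) (m / 2) / 2 := by
    rw [← integral_rpow_mul_posPart_rpow (by positivity : (0 : ℝ) < m / 2) hβ,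
      ← integral_comp_rpow_Ioi_of_pos
        (g := fun y : ℝ => y ^ ((m : ℝ) / 2 - 1) * (max (1 - y) 0) ^ β) (p := 2) (by norm_num), ← integral_div]
    refine setIntegral_congr_fun measurableSet_Ioi fun y hy => ?_
    have hy : 0 < y := hy
    have h2 : y ^ (m - 1) = y * y ^ ((2 : ℝ) * (m / 2 - 1)) := by
      nth_rewrite 2 [← Real.rpow_one y]
      rw [← Real.rpow_natCast, Nat.cast_sub hm, ← Real.rpow_add hy]
      congr 1
      push_cast
      ring
    simp only [smul_eq_mul]
    rw [← Real.rpow_mul hy.le, h2, Real.rpow_two]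
    norm_num
    ring
  have := integral_fun_norm_addHaar (volume : Measure (EuclideanSpace ℝ (Fin m)))
    (fun r => (max (1 - r ^ 2) 0) ^ β)
  rw [this, finrank_euclideanSpace_fin, hrad, hball]
  have hG : 0 < Real.Gamma ((m : ℝ) / 2) := Real.Gamma_pos_of_pos (by positivity)
  simp only [nsmul_eq_mul, smul_eq_mul]
  field_simp

/-- Whitening: a factorization `S⁻¹ = Bᵀ B` turns the Mahalanobis form into a squared Euclidean
norm, at the price of the Jacobian `(det S)^{1/2}`. -/
lemma integral_comp_mahalanobis (m : ℕ) (a : EuclideanSpace ℝ (Fin m))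
    (S : Matrix (Fin m) (Fin m) ℝ) (hS : S.PosDef) (g : ℝ → ℝ) :
    ∫ x, g (mahalanobis m S a x)
      = S.det ^ ((1 : ℝ) / 2) * ∫ x : EuclideanSpace ℝ (Fin m), g (‖x‖ ^ 2) := by
  obtain ⟨B, hB⟩ : ∃ B : Matrix (Fin m) (Fin m) ℝ, S⁻¹ = Bᵀ * B := by
    open scoped MatrixOrder in
    exact CStarAlgebra.nonneg_iff_eq_star_mul_self.mp hS.inv.posSemidef.nonneg
  have hdet : B.det ^ 2 = S.det⁻¹ := by
    have := congrArg Matrix.det hB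
    rw [Matrix.det_nonsing_inv, Ring.inverse_eq_inv', det_mul, det_transpose] at this
    rw [this, sq]
  have hSd := hS.det_pos
  have hB0 : B.det ≠ 0 := by
    intro h
    rw [h] at hdet
    have := inv_pos.2 hSd
    rw [← hdet] at this
    norm_num at this
  have habs : |B.det⁻¹| = S.det ^ ((1 : ℝ) / 2) := by
    rw [← Real.sqrt_eq_rpow, ← Real.sqrt_sq_eq_abs, inv_pow, hdet, inv_inv]
  let L : EuclideanSpace ℝ (Fin m) →ₗ[ℝ] EuclideanSpace ℝ (Fin m) := B.toLpLin 2 2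
  have hL : LinearMap.det L = B.det := LinearMap.det_toLpLin 2 B
  have hq : ∀ x, mahalanobis m S a x = ‖L (x - a)‖ ^ 2 := by
    intro x
    rw [EuclideanSpace.real_norm_sq_eq]
    unfold mahalanobis
    rw [hB, ← mulVec_mulVec, dotProduct_mulVec, vecMul_transpose]
    simp only [dotProduct, sq]
    rfl
  simp_rw [hq]
  rw [integral_sub_right_eq_self (fun x => g (‖L x‖ ^ 2)) a]
  have hL0 : LinearMap.det L ≠ 0 := by rwa [hL]
  have hemb : MeasurableEmbedding L :=
    ((LinearMap.equivOfDetNeZero L hL0).toContinuousLinearEquiv.toHomeomorph).measurableEmbedding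
  rw [← hemb.integral_map (fun y => g (‖y‖ ^ 2)),
    Measure.map_linearMap_addHaar_eq_smul_addHaar _ hL0, integral_smul_measure, hL, habs,
    ENNReal.toReal_ofReal (by positivity), smul_eq_mul]

/-- **Rényi entropy of the multivariate Pearson Type II distribution.**
For `γ > 0` and `q > 0` with `q ≠ 1` and `qγ + 1 > 0`,
`H_q(f^P_{a,Σ,γ}) = (1/2) log det Σ + c'_P(m,q,γ)` where
`c'_P(m,q,γ) = (1/(1−q)) log[B(qγ+1, m/2) / B(γ+1, m/2)^q]
  + (m/2) log π − log Γ(m/2)`. -/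
theorem renyi_entropy_pearsonII
    (m : ℕ) (hm : 1 ≤ m) (a : EuclideanSpace ℝ (Fin m))
    (S : Matrix (Fin m) (Fin m) ℝ) (hS : S.PosDef)
    (γ : ℝ) (hγ : 0 < γ)
    (q : ℝ) (hq_pos : 0 < q) (hq_ne : q ≠ 1) (hqγ : 0 < q * γ + 1) :
    (1 / (1 - q)) * Real.log (∫ x, pearsonPdf m a S γ x ^ q) =
      (1 / 2) * Real.log S.det +
        ((1 / (1 - q)) *
            Real.log (realBeta (q * γ + 1) (m / 2) / realBeta (γ + 1) (m / 2) ^ q) +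
          ((m : ℝ) / 2) * Real.log π - Real.log (Real.Gamma (m / 2))) := by
  have hq1 : 1 - q ≠ 0 := sub_ne_zero.2 hq_ne.symm
  have hm0 : (0 : ℝ) < m := by exact_mod_cast hm
  have hqg : 0 < q * γ := mul_pos hq_pos hγ
  have hSd := hS.det_pos
  have hG : 0 < Real.Gamma ((m : ℝ) / 2) := Real.Gamma_pos_of_pos (by positivity)
  have hB : ∀ {β : ℝ}, 0 < β → 0 < realBeta (β + 1) ((m : ℝ) / 2) := fun hβ =>
    ProbabilityTheory.beta_pos (by linarith) (by positivity)
  have hB1 := hB hγ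
  have hB2 := hB hqg
  have hc : pearsonConst m γ
      = Real.Gamma (m / 2) / (π ^ ((m : ℝ) / 2) * realBeta (γ + 1) (m / 2)) := by
    have h1 : 0 < Real.Gamma (γ + 1) := Real.Gamma_pos_of_pos (by linarith)
    have h2 : 0 < Real.Gamma (m / 2 + γ + 1) := Real.Gamma_pos_of_pos (by positivity)
    have h3 : γ + 1 + (m : ℝ) / 2 = m / 2 + γ + 1 := by ring
    unfold pearsonConst realBeta
    rw [h3]
    field_simp
  have hP : 0 < π ^ ((m : ℝ) / 2) := Real.rpow_pos_of_pos pi_pos _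
  have hc0 : 0 < pearsonConst m γ := by rw [hc]; positivity
  have hint : ∫ x, pearsonPdf m a S γ x ^ q
      = (pearsonConst m γ * S.det ^ (-(1 : ℝ) / 2)) ^ q * (S.det ^ ((1 : ℝ) / 2) *
        (π ^ ((m : ℝ) / 2) / Real.Gamma (m / 2) * realBeta (q * γ + 1) (m / 2))) := by
    rw [← integral_posPart_norm m hm hqg,
      ← integral_comp_mahalanobis m a S hS (fun t => (max (1 - t) 0) ^ (q * γ)),
      ← integral_const_mul]
    congr 1 with x
    unfold pearsonPdf
    rw [Real.mul_rpow (by positivity) (by positivity), ← Real.rpow_mul (le_max_right _ _),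
      mul_comm γ q]
  rw [hint, hc]
  have hD : ∀ t : ℝ, S.det ^ t ≠ 0 := fun t => (Real.rpow_pos_of_pos hSd t).ne'
  have hpos : 0 < Real.Gamma (m / 2) / (π ^ ((m : ℝ) / 2) * realBeta (γ + 1) (m / 2))
      * S.det ^ (-(1 : ℝ) / 2) := by positivity
  rw [Real.log_mul (by positivity) (by positivity), Real.log_rpow hpos,
    Real.log_mul (by positivity) (hD _), Real.log_div (by positivity) (by positivity),
    Real.log_mul hP.ne' hB1.ne', Real.log_mul (hD _) (by positivity),
    Real.log_mul (by positivity) hB2.ne', Real.log_div hP.ne' hG.ne',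
    Real.log_div hB2.ne' (by positivity), Real.log_rpow hSd, Real.log_rpow hSd,
    Real.log_rpow pi_pos, Real.log_rpow hB1]
  field_simp
  ring
end

section
/- (Maximum Rényi entropy, Pearson Type II case.) Let a ∈ ℝ^m, C symmetric positive definite, and let K be the class of probability densities f on ℝ^m with mean a and covariance matrix C. For q > 1, the Rényi entropy H_q is uniquely maximized over K by the multivariate Pearson Type II density f^P_{a,Σ,γ} with γ = 1/(q−1) and Σ = (2γ + m + 2) C; that is, H_q(f) ≤ H_q(f^P_{a,Σ,γ}) for all f ∈ K with ∫ f^q < ∞, with equality if and only if f = f^P_{a,Σ,γ} almost everywhere. -/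
/-!
Since `1 / (1 - q) < 0`, maximizing the Rényi entropy means minimizing `∫ f ^ q`. Let `g` be the
Pearson density, `Q` the Mahalanobis form of `Sg` and `κ` the constant factor of `g`. Because
`γ (q - 1) = 1`, one has `g ^ (q - 1) = κ ^ (q - 1) (1 - Q)₊`. Integrating the tangent inequality
`f ^ q ≥ g ^ q + q g ^ (q - 1) (f - g)` (`rpow_tangent`) gives
`∫ f ^ q - ∫ g ^ q ≥ q (∫ g ^ (q - 1) f - ∫ g ^ q)`. The right-hand side is nonnegative:
`∫ g ^ (q - 1) f ≥ κ ^ (q - 1) ∫ (1 - Q) f`, and the covariance constraint evaluates the last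
integral to `1 - m / (2 γ + m + 2)` (`sum_inv_mul`), while `∫ g ^ q` equals
`κ ^ (q - 1) (1 - m / (2 γ + m + 2))` exactly. In the equality case the integral of the nonnegative
gap in the tangent inequality vanishes, hence `f = g` almost everywhere.

The value of `∫ g ^ q` comes from the normalization of the Pearson density with exponent `γ + 1`
(`integral_mahalanobis`), obtained by a linear substitution, polar coordinates and the Beta integral,
together with the functional equation of `Γ` (`pearsonConst_add_one`).
-/

open MeasureTheory Real Matrix

/-- The Beta integral, with the upper limit of integration encoded by the positive part of `1 - y`.
It is the normalization of the Beta distribution with parameters `α` and `s + 1`. -/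
lemma integral_beta_max {α s : ℝ} (hα : 0 < α) (hs : 0 < s) :
    ∫ y in Set.Ioi (0 : ℝ), y ^ (α - 1) * max (1 - y) 0 ^ s =
      ProbabilityTheory.beta α (s + 1) := by
  have hs1 : 0 < s + 1 := by linarith
  have hB := ProbabilityTheory.beta_pos hα hs1
  have h1 : ∫ y, ProbabilityTheory.betaPDFReal α (s + 1) y = 1 := by
    rw [integral_eq_lintegral_of_nonneg_ae]
    · have := ProbabilityTheory.lintegral_betaPDF_eq_one hα hs1
      simp only [ProbabilityTheory.betaPDF] at this
      rw [this]; simp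
    · refine Filter.Eventually.of_forall fun y => ?_
      by_cases hy : 0 < y ∧ y < 1
      · exact (ProbabilityTheory.betaPDFReal_pos hy.1 hy.2 hα hs1).le
      · simp [ProbabilityTheory.betaPDFReal, hy]
    · exact (ProbabilityTheory.stronglyMeasurable_betaPDFReal _ _).aestronglyMeasurable
  have h2 : ∫ y in Set.Ioi (0 : ℝ), ProbabilityTheory.betaPDFReal α (s + 1) y = 1 := by
    refine Eq.trans (setIntegral_eq_integral_of_forall_compl_eq_zero ?_) h1
    intro y hy
    simp only [Set.mem_Ioi, not_lt] at hy
    simp [ProbabilityTheory.betaPDFReal, hy.not_gt]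
  refine Eq.trans ?_ (mul_one (ProbabilityTheory.beta α (s + 1)))
  rw [← congrArg (ProbabilityTheory.beta α (s + 1) * ·) h2, ← integral_const_mul]
  refine setIntegral_congr_fun measurableSet_Ioi fun y hy => ?_
  simp only [Set.mem_Ioi] at hy
  by_cases hy1 : y < 1
  · simp only [ProbabilityTheory.betaPDFReal, hy, hy1, and_self, if_true]
    rw [max_eq_left (by linarith), add_sub_cancel_right]
    field_simp
  · simp only [ProbabilityTheory.betaPDFReal, hy1, and_false, if_false]
    rw [max_eq_right (by linarith), zero_rpow hs.ne', mul_zero, mul_zero]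

/-- The radial part of the integral of `(1 - ‖x‖²)₊ ^ s`; the substitution `y ↦ y ^ 2` turns it into
a Beta integral. -/
lemma integral_radial {m : ℕ} (hm : 1 ≤ m) {s : ℝ} (hs : 0 < s) :
    ∫ y in Set.Ioi (0 : ℝ), y ^ (m - 1) * max (1 - y ^ 2) 0 ^ s =
      ProbabilityTheory.beta ((m : ℝ) / 2) (s + 1) / 2 := by
  have hm0 : (0 : ℝ) < m := by exact_mod_cast hm
  rw [← integral_beta_max (by positivity) hs,
    ← integral_comp_rpow_Ioi_of_pos
      (g := fun y : ℝ => y ^ ((m : ℝ) / 2 - 1) * max (1 - y) 0 ^ s) (p := 2) (by norm_num),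
    ← integral_div]
  refine setIntegral_congr_fun measurableSet_Ioi fun y hy => ?_
  simp only [Set.mem_Ioi] at hy
  have e : y ^ (m - 1) = y * (y ^ (2 : ℝ)) ^ ((m : ℝ) / 2 - 1) := by
    rw [← rpow_mul hy.le, ← rpow_natCast, Nat.cast_sub hm]
    nth_rewrite 2 [← rpow_one y]
    rw [← rpow_add hy]
    congr 1
    push_cast
    ring
  have e1 : y ^ ((2 : ℝ) - 1) = y := by norm_num
  simp only [smul_eq_mul]
  rw [e, e1, rpow_two]
  ring

lemma pearsonConst_pos (m : ℕ) {s : ℝ} (hs : 0 < s) : 0 < pearsonConst m s := by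
  unfold pearsonConst
  have h1 := Gamma_pos_of_pos (show 0 < (m : ℝ) / 2 + s + 1 by positivity)
  have h2 := Gamma_pos_of_pos (show 0 < s + 1 by positivity)
  positivity

/-- The normalization of the standard Pearson Type II density (centre `0`, identity scale matrix),
by integration in polar coordinates. -/
lemma integral_ball {m : ℕ} (hm : 1 ≤ m) {s : ℝ} (hs : 0 < s) :
    ∫ x : EuclideanSpace ℝ (Fin m), max (1 - ‖x‖ ^ 2) 0 ^ s = (pearsonConst m s)⁻¹ := by
  have hm0 : (0 : ℝ) < m := by exact_mod_cast hm
  have : Nonempty (Fin m) := ⟨⟨0, hm⟩⟩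
  have : Nontrivial (EuclideanSpace ℝ (Fin m)) := by
    apply Module.nontrivial_of_finrank_pos (R := ℝ); simp; lia
  have hG := Gamma_pos_of_pos (show 0 < (m : ℝ) / 2 by positivity)
  have hG1 : Gamma ((m : ℝ) / 2 + 1) = m / 2 * Gamma ((m : ℝ) / 2) :=
    Gamma_add_one (by positivity)
  have hG2 := Gamma_pos_of_pos (show 0 < (m : ℝ) / 2 + s + 1 by positivity)
  have hG3 := Gamma_pos_of_pos (show 0 < s + 1 by positivity)
  have hpi : √π ^ m = π ^ ((m : ℝ) / 2) := by
    rw [sqrt_eq_rpow, ← rpow_natCast, ← rpow_mul pi_pos.le]; congr 1; ring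
  rw [integral_fun_norm_addHaar volume (fun r : ℝ => max (1 - r ^ 2) 0 ^ s)]
  simp only [finrank_euclideanSpace, Fintype.card_fin, smul_eq_mul, nsmul_eq_mul]
  rw [integral_radial hm hs, Measure.real, EuclideanSpace.volume_ball, Fintype.card_fin, hG1, hpi]
  simp only [ENNReal.ofReal_one, one_pow, one_mul]
  rw [ENNReal.toReal_ofReal (by positivity)]
  unfold ProbabilityTheory.beta pearsonConst
  rw [← add_assoc]
  field_simp

open scoped MatrixOrder Matrix.Norms.L2Operator in
lemma exists_factor {m : ℕ} {S : Matrix (Fin m) (Fin m) ℝ} (hS : S.PosDef) :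
    ∃ B : Matrix (Fin m) (Fin m) ℝ, S⁻¹ = Bᵀ * B := by
  obtain ⟨B, hB⟩ := CStarAlgebra.nonneg_iff_eq_star_mul_self.mp hS.inv.posSemidef.nonneg
  exact ⟨B, by rw [hB, star_eq_conjTranspose, conjTranspose_eq_transpose_of_trivial]⟩

/-- The normalization of the general Pearson Type II density: writing `S⁻¹ = Bᵀ B`, the linear
substitution `x ↦ B (x - a)` reduces to `integral_ball`, with `|det B|⁻¹ = (det S) ^ (1 / 2)`. -/
lemma integral_mahalanobis {m : ℕ} (hm : 1 ≤ m) (a : EuclideanSpace ℝ (Fin m))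
    {S : Matrix (Fin m) (Fin m) ℝ} (hS : S.PosDef) {s : ℝ} (hs : 0 < s) :
    ∫ x, max (1 - mahalanobis m S a x) 0 ^ s = S.det ^ ((1 : ℝ) / 2) * (pearsonConst m s)⁻¹ := by
  obtain ⟨B, hB⟩ := exists_factor hS
  have hdet : S.det⁻¹ = B.det ^ 2 := by
    have := congrArg Matrix.det hB
    rw [det_nonsing_inv, Ring.inverse_eq_inv', det_mul, det_transpose] at this
    rw [this]; ring
  have hSd := hS.det_pos
  have hBd : B.det ≠ 0 := by
    intro h
    rw [h] at hdet
    have := inv_pos.2 hSd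
    simp [hdet] at this
  have habs : |B.det⁻¹| = S.det ^ ((1 : ℝ) / 2) := by
    rw [← sqrt_eq_rpow, ← sqrt_sq_eq_abs, inv_pow, ← hdet, inv_inv]
  have hQ : ∀ x, mahalanobis m S a x = ‖Matrix.toLpLin 2 2 B (x - a)‖ ^ 2 := by
    intro x
    rw [EuclideanSpace.real_norm_sq_eq]
    unfold mahalanobis
    rw [hB, ← mulVec_mulVec, dotProduct_mulVec, vecMul_transpose]
    simp only [dotProduct, Matrix.toLpLin_apply, ← pow_two]
    rfl
  simp_rw [hQ]
  rw [integral_sub_right_eq_self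
    (fun x => max (1 - ‖Matrix.toLpLin 2 2 B x‖ ^ 2) 0 ^ s) a]
  have hTd : LinearMap.det (Matrix.toLpLin 2 2 B) ≠ 0 := by rwa [LinearMap.det_toLpLin]
  have hmap := Measure.map_linearMap_addHaar_eq_smul_addHaar
    (volume : Measure (EuclideanSpace ℝ (Fin m))) hTd
  rw [LinearMap.det_toLpLin, habs] at hmap
  have hcont : Continuous (Matrix.toLpLin 2 2 B) := LinearMap.continuous_of_finiteDimensional _
  have hc : Continuous fun x : EuclideanSpace ℝ (Fin m) => max (1 - ‖x‖ ^ 2) 0 ^ s :=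
    Continuous.rpow_const (by fun_prop) fun _ => Or.inr hs.le
  rw [← integral_map (φ := Matrix.toLpLin 2 2 B)
    (f := fun x => max (1 - ‖x‖ ^ 2) 0 ^ s) hcont.aemeasurable hc.aestronglyMeasurable,
    hmap, integral_smul_measure, integral_ball hm hs, ENNReal.toReal_ofReal (by positivity),
    smul_eq_mul]

/-- Strict convexity of `t ↦ t ^ q` on `[0, ∞)` in tangent-line form: the Bregman divergence of two
nonnegative numbers is nonnegative and vanishes only if they agree. After division by `v ^ q` this is
Bernoulli's inequality. -/
lemma rpow_tangent {q : ℝ} (hq : 1 < q) {u v : ℝ} (hu : 0 ≤ u) (hv : 0 ≤ v) :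
    0 ≤ u ^ q - v ^ q - q * v ^ (q - 1) * (u - v) ∧
      (u ^ q - v ^ q - q * v ^ (q - 1) * (u - v) = 0 → u = v) := by
  rcases hv.eq_or_lt with rfl | hv
  · rw [zero_rpow (by linarith), zero_rpow (by linarith)]
    simp only [mul_zero, sub_zero, zero_mul]
    refine ⟨by positivity, fun h => ?_⟩
    exact ((rpow_eq_zero_iff_of_nonneg hu).1 h).1
  · have hvq : v ^ q = v ^ (q - 1) * v := by rw [← rpow_add_one hv.ne']; ring_nf
    have hp : 0 < v ^ q := by positivity
    have key : u ^ q - v ^ q - q * v ^ (q - 1) * (u - v)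
        = v ^ q * ((1 + (u / v - 1)) ^ q - (1 + q * (u / v - 1))) := by
      have : (1 + (u / v - 1)) ^ q = u ^ q / v ^ q := by
        rw [add_sub_cancel, div_rpow hu hv.le]
      rw [this, mul_sub (v ^ q), mul_div_cancel₀ _ hp.ne', hvq]
      field_simp
      ring
    have hs : -1 ≤ u / v - 1 := by have : 0 ≤ u / v := by positivity
                                   linarith
    rw [key]
    constructor
    · exact mul_nonneg hp.le (sub_nonneg.2 (one_add_mul_self_le_rpow_one_add hs hq.le))
    · intro h
      by_contra hne
      have hs' : u / v - 1 ≠ 0 := by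
        intro h0
        apply hne
        field_simp at h0
        linarith
      have := mul_pos hp (sub_pos.2 (one_add_mul_self_lt_rpow_one_add hs hs' hq))
      linarith

lemma pearsonConst_add_one (m : ℕ) {s : ℝ} (hs : 0 < s) :
    pearsonConst m s * (pearsonConst m (s + 1))⁻¹ = 1 - m / (2 * s + m + 2) := by
  have hG2 := Gamma_pos_of_pos (show 0 < (m : ℝ) / 2 + s + 1 by positivity)
  have hG3 := Gamma_pos_of_pos (show 0 < s + 1 by positivity)
  have e1 : Gamma ((m : ℝ) / 2 + (s + 1) + 1) =
      ((m : ℝ) / 2 + s + 1) * Gamma ((m : ℝ) / 2 + s + 1) := by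
    rw [← add_assoc, Gamma_add_one (by positivity)]
  have e2 : Gamma (s + 1 + 1) = (s + 1) * Gamma (s + 1) := Gamma_add_one (by positivity)
  unfold pearsonConst
  rw [e1, e2]
  field_simp
  ring

/-- The expectation of the Mahalanobis form with scale matrix `k • C` under covariance `C`, that is,
`tr ((k C)⁻¹ C) = m / k`. -/
lemma sum_inv_mul {m : ℕ} {C : Matrix (Fin m) (Fin m) ℝ} (hC : C.PosDef) {k : ℝ} (hk : 0 < k) :
    ∑ i, ∑ j, (k • C)⁻¹ i j * C i j = m / k := by
  have hdet : IsUnit C.det := hC.det_pos.ne'.isUnit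
  have hinv : (k • C)⁻¹ = k⁻¹ • C⁻¹ := by
    apply Matrix.inv_eq_left_inv
    rw [smul_mul_smul_comm, Matrix.nonsing_inv_mul _ hdet, inv_mul_cancel₀ hk.ne', one_smul]
  have hsymm : ∀ i j, C i j = C j i := fun i j => by
    simpa using (hC.isHermitian.apply i j).symm
  have htr : ∑ i, ∑ j, C⁻¹ i j * C i j = m := by
    have : ∑ i, ∑ j, C⁻¹ i j * C i j = Matrix.trace (C⁻¹ * C) := by
      simp only [Matrix.trace, Matrix.diag, Matrix.mul_apply]
      exact Finset.sum_congr rfl fun i _ => Finset.sum_congr rfl fun j _ => by rw [hsymm i j]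
    rw [this, Matrix.nonsing_inv_mul _ hdet]
    simp
  rw [hinv]
  simp only [Matrix.smul_apply, smul_eq_mul, mul_assoc, ← Finset.mul_sum, htr]
  field_simp

/-- **Maximum Rényi entropy principle, Pearson Type II case.**
Among all probability densities `f` on `ℝ^m` with mean `a` and covariance matrix `C`
(symmetric positive definite), for `q > 1` the Rényi entropy
`H_q(f) = (1/(1-q)) log ∫ f^q` is uniquely maximized by the multivariate Pearson
Type II density with `γ = 1/(q−1)` and `Σ = (2γ + m + 2) C`: one has
`H_q(f) ≤ H_q(f^P_{a,Σ,γ})` whenever `∫ f^q < ∞`, with equality iff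
`f = f^P_{a,Σ,γ}` almost everywhere. -/
theorem renyi_entropy_max_pearsonII
    (m : ℕ) (hm : 1 ≤ m) (a : EuclideanSpace ℝ (Fin m))
    (C : Matrix (Fin m) (Fin m) ℝ) (hC : C.PosDef)
    (q : ℝ) (hq : 1 < q)
    (γ : ℝ) (hγ : γ = 1 / (q - 1))
    (Sg : Matrix (Fin m) (Fin m) ℝ) (hSg : Sg = (2 * γ + m + 2) • C)
    (f : EuclideanSpace ℝ (Fin m) → ℝ)
    (hf_meas : Measurable f) (hf_nonneg : ∀ x, 0 ≤ f x)
    (hf_int : Integrable f) (hf_prob : ∫ x, f x = 1)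
    (hmean_int : ∀ i, Integrable (fun x : EuclideanSpace ℝ (Fin m) => x i * f x))
    (hmean : ∀ i, ∫ x : EuclideanSpace ℝ (Fin m), x i * f x = a i)
    (hcov_int : ∀ i j, Integrable
      (fun x : EuclideanSpace ℝ (Fin m) => (x i - a i) * (x j - a j) * f x))
    (hcov : ∀ i j, ∫ x : EuclideanSpace ℝ (Fin m), (x i - a i) * (x j - a j) * f x = C i j)
    (hfq_int : Integrable (fun x => f x ^ q)) :
    ((1 / (1 - q)) * Real.log (∫ x, f x ^ q) ≤
        (1 / (1 - q)) * Real.log (∫ x, pearsonPdf m a Sg γ x ^ q)) ∧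
    (((1 / (1 - q)) * Real.log (∫ x, f x ^ q) =
        (1 / (1 - q)) * Real.log (∫ x, pearsonPdf m a Sg γ x ^ q)) ↔
      f =ᵐ[volume] pearsonPdf m a Sg γ) := by
  have hq1 : 0 < q - 1 := by linarith
  have hγ0 : 0 < γ := by rw [hγ]; positivity
  have hγq : γ * (q - 1) = 1 := by rw [hγ]; field_simp
  have hk : 0 < 2 * γ + m + 2 := by positivity
  have hS : Sg.PosDef := by rw [hSg]; exact hC.smul hk
  have hSd := hS.det_pos
  have hc := pearsonConst_pos m hγ0
  set g := pearsonPdf m a Sg γ with hg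
  set κ := pearsonConst m γ * Sg.det ^ (-(1 : ℝ) / 2) with hκ
  have hκ0 : 0 < κ := by positivity
  set p : EuclideanSpace ℝ (Fin m) → ℝ := fun x => max (1 - mahalanobis m Sg a x) 0 with hp
  have hp0 : ∀ x, 0 ≤ p x := fun x => le_max_right _ _
  have hgp : ∀ x, g x = κ * p x ^ γ := fun x => rfl
  have hg0 : ∀ x, 0 ≤ g x := fun x => by
    rw [hgp]; exact mul_nonneg hκ0.le (rpow_nonneg (hp0 x) _)
  have hgq1 : ∀ x, g x ^ (q - 1) = κ ^ (q - 1) * p x := fun x => by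
    rw [hgp, mul_rpow hκ0.le (rpow_nonneg (hp0 x) _), ← rpow_mul (hp0 x), hγq, rpow_one]
  have hgq : ∀ x, g x ^ q = κ ^ q * p x ^ (γ + 1) := fun x => by
    rw [hgp, mul_rpow hκ0.le (rpow_nonneg (hp0 x) _), ← rpow_mul (hp0 x)]
    congr 2
    linarith
  have hgmul : ∀ x, g x ^ (q - 1) * g x = g x ^ q := fun x => by
    rcases (hg0 x).eq_or_lt with h | h
    · rw [← h, mul_zero, zero_rpow (by linarith)]
    · rw [← rpow_add_one h.ne', sub_add_cancel]
  have hJ : ∫ x, g x ^ q = κ ^ (q - 1) * (1 - m / (2 * γ + m + 2)) := by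
    simp_rw [hgq]
    rw [integral_const_mul, integral_mahalanobis hm a hS (by linarith),
      ← pearsonConst_add_one m hγ0]
    have e1 : κ ^ q = κ ^ (q - 1) * κ := by rw [← rpow_add_one hκ0.ne', sub_add_cancel]
    have e2 : Sg.det ^ (-(1 : ℝ) / 2) * Sg.det ^ ((1 : ℝ) / 2) = 1 := by
      rw [← rpow_add hSd]; norm_num
    rw [e1]
    calc _ = κ ^ (q - 1) * (pearsonConst m γ * (pearsonConst m (γ + 1))⁻¹) *
          (Sg.det ^ (-(1 : ℝ) / 2) * Sg.det ^ ((1 : ℝ) / 2)) := by rw [hκ]; ring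
      _ = _ := by rw [e2, mul_one]
  have hJ0 : 0 < ∫ x, g x ^ q := by
    rw [hJ]
    apply mul_pos (by positivity)
    rw [sub_pos, div_lt_one hk]
    linarith
  -- A nonzero Bochner integral forces integrability.
  have hgq_int : Integrable (fun x => g x ^ q) := .of_integral_ne_zero hJ0.ne'
  have hQf : ∀ x, mahalanobis m Sg a x * f x =
      ∑ i, ∑ j, Sg⁻¹ i j * ((x i - a i) * (x j - a j) * f x) := fun x => by
    simp only [mahalanobis, dotProduct, mulVec, Finset.mul_sum, Finset.sum_mul]
    exact Finset.sum_congr rfl fun i _ => Finset.sum_congr rfl fun j _ => by ring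
  have hQint : Integrable (fun x => mahalanobis m Sg a x * f x) := by
    simp_rw [hQf]
    exact integrable_finsetSum _ fun i _ => integrable_finsetSum _ fun j _ =>
      (hcov_int i j).const_mul _
  have hQ : ∫ x, mahalanobis m Sg a x * f x = m / (2 * γ + m + 2) := by
    simp_rw [hQf]
    have hterm : ∀ i j, Integrable (fun x : EuclideanSpace ℝ (Fin m) =>
        Sg⁻¹ i j * ((x i - a i) * (x j - a j) * f x)) := fun i j => (hcov_int i j).const_mul _
    refine (integral_finsetSum _ fun i _ => integrable_finsetSum _ fun j _ => hterm i j).trans ?_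
    rw [← sum_inv_mul hC hk, ← hSg]
    refine Finset.sum_congr rfl fun i _ => ?_
    refine (integral_finsetSum _ fun j _ => hterm i j).trans ?_
    refine Finset.sum_congr rfl fun j _ => ?_
    rw [integral_const_mul, hcov]
  have hlin_int : Integrable (fun x => (1 - mahalanobis m Sg a x) * f x) := by
    simp_rw [sub_mul, one_mul]; exact hf_int.sub hQint
  have hlin : ∫ x, (1 - mahalanobis m Sg a x) * f x = 1 - m / (2 * γ + m + 2) := by
    simp_rw [sub_mul, one_mul]; rw [integral_sub hf_int hQint, hf_prob, hQ]
  have hpf_int : Integrable (fun x => p x * f x) := by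
    refine hlin_int.pos_part.congr (Filter.Eventually.of_forall fun x => ?_)
    simp only [hp]
    rw [max_mul_of_nonneg _ _ (hf_nonneg x), zero_mul]
  -- Passing from `1 - Q` to its positive part only increases the integral against `f ≥ 0`.
  have hpf : 1 - m / (2 * γ + m + 2) ≤ ∫ x, p x * f x := by
    rw [← hlin]
    exact integral_mono hlin_int hpf_int fun x =>
      mul_le_mul_of_nonneg_right (le_max_left _ _) (hf_nonneg x)
  have hcross : ∫ x, g x ^ q ≤ κ ^ (q - 1) * ∫ x, p x * f x := by
    rw [hJ]; exact mul_le_mul_of_nonneg_left hpf (by positivity)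
  -- `D` is the pointwise Bregman divergence of `f` and `g` for the convex function `t ↦ t ^ q`.
  set D : EuclideanSpace ℝ (Fin m) → ℝ := fun x =>
    f x ^ q - g x ^ q - q * g x ^ (q - 1) * (f x - g x) with hD
  have hDx : ∀ x, D x =
      f x ^ q - q * (κ ^ (q - 1) * (p x * f x)) + (q - 1) * g x ^ q := fun x => by
    simp only [hD]
    rw [← mul_assoc (κ ^ (q - 1)), ← hgq1, ← hgmul]
    ring
  have i1 : Integrable (fun x => q * (κ ^ (q - 1) * (p x * f x))) :=
    (hpf_int.const_mul _).const_mul _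
  have i2 : Integrable (fun x => f x ^ q - q * (κ ^ (q - 1) * (p x * f x))) := hfq_int.sub i1
  have hD_int : Integrable D := by
    rw [show D = _ from funext hDx]
    exact i2.add (hgq_int.const_mul _)
  have hDI : ∫ x, D x = (∫ x, f x ^ q) - q * (κ ^ (q - 1) * ∫ x, p x * f x) +
      (q - 1) * ∫ x, g x ^ q := by
    simp_rw [hDx]
    rw [integral_add i2 (hgq_int.const_mul _), integral_sub hfq_int i1,
      integral_const_mul, integral_const_mul, integral_const_mul]
  have hD0 : 0 ≤ D := fun x => (rpow_tangent hq (hf_nonneg x) (hg0 x)).1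
  have hDI0 : 0 ≤ ∫ x, D x := integral_nonneg hD0
  have hle : ∫ x, D x ≤ (∫ x, f x ^ q) - ∫ x, g x ^ q := by
    rw [hDI]
    nlinarith [mul_le_mul_of_nonneg_left hcross (show 0 ≤ q by linarith)]
  have hmain : ∫ x, g x ^ q ≤ ∫ x, f x ^ q := by linarith
  have hneg : 1 / (1 - q) < 0 := one_div_neg.2 (by linarith)
  refine ⟨mul_le_mul_of_nonpos_left (log_le_log hJ0 hmain) hneg.le, fun h => ?_, fun h => ?_⟩
  · have hlog := mul_left_cancel₀ hneg.ne h
    have heq : ∫ x, f x ^ q = ∫ x, g x ^ q :=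
      log_injOn_pos (Set.mem_Ioi.2 (hJ0.trans_le hmain)) (Set.mem_Ioi.2 hJ0) hlog
    have hz : ∫ x, D x = 0 := le_antisymm (by linarith) hDI0
    filter_upwards [(integral_eq_zero_iff_of_nonneg hD0 hD_int).1 hz] with x hx
    exact (rpow_tangent hq (hf_nonneg x) (hg0 x)).2 hx
  · have : ∫ x, f x ^ q = ∫ x, g x ^ q :=
      integral_congr_ae (h.mono fun x hx => by simp only [hx])
    rw [this]
end

section
/- Let a ∈ ℝ^m, C symmetric positive definite, K the class of probability densities on ℝ^m with mean a and covariance C, and q > 1. Then the maximum value of H_q over K equals (1/2) log det Σ + c'_P(m,q,γ), where γ = 1/(q−1), Σ = (2γ + m + 2) C, and c'_P(m,q,γ) = (1/(1−q)) log[ B(qγ+1, m/2) / B(γ+1, m/2)^q ] + (m/2) log π − log Γ(m/2). -/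
/-!
The maximiser is the Pearson II density `g(x) = A (1 - u(x))₊ ^ γ` with
`u(x) = (x - a)ᵀ Σ⁻¹ (x - a)` and `A` the normalising constant.

*It lies in the class.* Factor `Σ = S Sᵀ` and substitute `x = a + S y`; every integral becomes one
of `(1 - ‖y‖²)₊ ^ s` times a polynomial of degree at most two. The total mass is a Beta integral in
polar coordinates (`integral_bump`). Invariance under linear isometries kills the first and the
mixed second moments and makes the `m` pure second moments equal; their sum is
`∫ ‖y‖² (1 - ‖y‖²)₊ ^ s`, the difference of the masses for the exponents `s` and `s + 1`
(`integral_coord_sq_mul_bump`). Since `g ^ q` is again of the same shape, with exponent `q γ`,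
its integral and hence `H_q(g)` are explicit (`renyi_value_eq`).

*It is optimal.* As `γ (q - 1) = 1`, on its support `g ^ (q - 1) = A ^ (q - 1) (1 - u)`, so the
tangent line inequality for `t ↦ t ^ q` gives, for every density `f` of the class,
`f ^ q ≥ g ^ q + q A ^ (q - 1) (1 - u) (f - g)`, also off the support of `g`, where `1 - u ≤ 0`
(`rpow_tangent`). The integral of `(1 - u) f` depends on mass and covariance only
(`integral_normSq_mul`), so the last term integrates to zero and `∫ f ^ q ≥ ∫ g ^ q`. As
`1 / (1 - q) < 0`, this is `H_q(f) ≤ H_q(g)`.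
-/

open MeasureTheory Real Matrix

/-! ### Radial integrals on the unit ball -/

/-- The radial profile `(1 - ‖y‖²)₊ ^ s`. It vanishes outside the unit ball only for `s ≠ 0`,
because `0 ^ 0 = 1`. -/
noncomputable def bump {m : ℕ} (s : ℝ) (y : EuclideanSpace ℝ (Fin m)) : ℝ :=
  (max 0 (1 - ‖y‖ ^ 2)) ^ s

/-- The Beta integral, with the range of integration encoded in the positive part. -/
lemma integral_Ioi_eq_realBeta {s b : ℝ} (hs : 0 < s) (hb : 0 < b) :
    ∫ t in Set.Ioi (0 : ℝ), t ^ (b - 1) * (max 0 (1 - t)) ^ s = realBeta (s + 1) b := by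
  have hsym : realBeta (s + 1) b = ProbabilityTheory.beta b (s + 1) := by
    rw [realBeta, ProbabilityTheory.beta, mul_comm, add_comm b]
  rw [hsym, ProbabilityTheory.beta_eq_betaIntegralReal _ _ hb (by linarith), Complex.betaIntegral]
  have h1 : ∫ t in Set.Ioi (0 : ℝ), t ^ (b - 1) * (max 0 (1 - t)) ^ s
      = ∫ t in Set.Ioc (0 : ℝ) 1, t ^ (b - 1) * (max 0 (1 - t)) ^ s := by
    refine (setIntegral_eq_of_subset_of_forall_sdiff_eq_zero measurableSet_Ioi
      Set.Ioc_subset_Ioi_self ?_)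
    rintro t ⟨ht0, ht1⟩
    have : 1 < t := by
      by_contra h
      exact ht1 ⟨ht0, not_lt.mp h⟩
    rw [max_eq_left (by linarith), zero_rpow hs.ne', mul_zero]
  have h2 : ∫ x in (0 : ℝ)..1, (x : ℂ) ^ ((b : ℂ) - 1) * (1 - (x : ℂ)) ^ (((s + 1 : ℝ) : ℂ) - 1)
      = ∫ x in (0 : ℝ)..1, ((x ^ (b - 1) * (max 0 (1 - x)) ^ s : ℝ) : ℂ) := by
    refine intervalIntegral.integral_congr fun x hx => ?_
    rw [Set.uIcc_of_le zero_le_one] at hx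
    have h1x : 0 ≤ 1 - x := by linarith [hx.2]
    rw [max_eq_right h1x, Complex.ofReal_mul, Complex.ofReal_cpow hx.1, Complex.ofReal_cpow h1x]
    push_cast
    ring_nf
  rw [h2, intervalIntegral.integral_ofReal, Complex.ofReal_re, h1,
    intervalIntegral.integral_of_le zero_le_one]

/-- The total mass `π^(m/2) / Γ(m/2) · B(s + 1, m/2)` of `bump s` on `ℝ^m`; see `integral_bump`. -/
noncomputable def bumpMass (m : ℕ) (s : ℝ) : ℝ :=
  √π ^ m / Real.Gamma (m / 2) * realBeta (s + 1) (m / 2)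

lemma integral_bump {m : ℕ} (hm : 1 ≤ m) {s : ℝ} (hs : 0 < s) :
    ∫ y : EuclideanSpace ℝ (Fin m), bump s y = bumpMass m s := by
  have : Nonempty (Fin m) := ⟨⟨0, hm⟩⟩
  have hm0 : (0 : ℝ) < m := by exact_mod_cast hm
  have h := integral_fun_norm_addHaar (volume : Measure (EuclideanSpace ℝ (Fin m)))
    (fun r : ℝ => (max 0 (1 - r ^ 2)) ^ s)
  simp only [bump]
  rw [h]
  have h3 : ∫ y in Set.Ioi (0 : ℝ), y ^ (m - 1) • (max 0 (1 - y ^ 2)) ^ s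
      = (1 / 2) * realBeta (s + 1) (m / 2) := by
    rw [← integral_Ioi_eq_realBeta hs (by positivity), ← integral_const_mul]
    conv_rhs => rw [← integral_comp_rpow_Ioi_of_pos (two_pos : (0 : ℝ) < 2)]
    refine setIntegral_congr_fun measurableSet_Ioi fun x hx => ?_
    have hx : 0 < x := hx
    simp only [smul_eq_mul, rpow_two]
    have : x ^ (m - 1) = x * (x ^ 2) ^ ((m : ℝ) / 2 - 1) := by
      rw [← rpow_natCast, ← rpow_two, ← rpow_mul hx.le, Nat.cast_sub hm]
      nth_rewrite 2 [← rpow_one x]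
      rw [← rpow_add hx]
      congr 1
      push_cast
      ring
    rw [this]
    norm_num
    ring
  rw [finrank_euclideanSpace, Fintype.card_fin, h3]
  simp only [Measure.real, EuclideanSpace.volume_ball]
  have hG : 0 < Real.Gamma (m / 2) := Real.Gamma_pos_of_pos (by positivity)
  have hG1 : 0 < Real.Gamma ((m : ℝ) / 2 + 1) := Real.Gamma_pos_of_pos (by positivity)
  simp only [ENNReal.ofReal_one, one_pow, one_mul, Fintype.card_fin]
  rw [ENNReal.toReal_ofReal (by positivity), Real.Gamma_add_one (by positivity), bumpMass]
  simp only [smul_eq_mul, nsmul_eq_mul]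
  field_simp

lemma bumpMass_pos {m : ℕ} (hm : 1 ≤ m) {s : ℝ} (hs : 0 < s) : 0 < bumpMass m s := by
  have hm0 : (0 : ℝ) < m := by exact_mod_cast hm
  have h1 := Real.Gamma_pos_of_pos (show 0 < (m : ℝ) / 2 by positivity)
  have h2 := Real.Gamma_pos_of_pos (show 0 < s + 1 by positivity)
  have h3 := Real.Gamma_pos_of_pos (show 0 < s + 1 + (m : ℝ) / 2 by positivity)
  unfold bumpMass realBeta
  positivity

lemma bumpMass_add_one {m : ℕ} (hm : 1 ≤ m) {s : ℝ} (hs : 0 < s) :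
    bumpMass m (s + 1) = bumpMass m s * ((2 * s + 2) / (2 * s + m + 2)) := by
  have hm0 : (0 : ℝ) < m := by exact_mod_cast hm
  have h1 := Real.Gamma_pos_of_pos (show 0 < (m : ℝ) / 2 by positivity)
  have h3 := Real.Gamma_pos_of_pos (show 0 < s + 1 + (m : ℝ) / 2 by positivity)
  unfold bumpMass realBeta
  rw [Real.Gamma_add_one (show s + 1 ≠ 0 by positivity),
    show s + 1 + 1 + (m : ℝ) / 2 = (s + 1 + m / 2) + 1 by ring,
    Real.Gamma_add_one (show s + 1 + (m : ℝ) / 2 ≠ 0 by positivity)]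
  field_simp
  ring

lemma bump_nonneg {m : ℕ} (s : ℝ) (y : EuclideanSpace ℝ (Fin m)) : 0 ≤ bump s y :=
  rpow_nonneg (le_max_left _ _) _

lemma continuous_bump {m : ℕ} {s : ℝ} (hs : 0 < s) :
    Continuous (bump s : EuclideanSpace ℝ (Fin m) → ℝ) := by
  unfold bump
  exact (by fun_prop : Continuous fun y : EuclideanSpace ℝ (Fin m) => max 0 (1 - ‖y‖ ^ 2)).rpow_const
    fun _ => Or.inr hs.le

lemma hasCompactSupport_bump {m : ℕ} {s : ℝ} (hs : 0 < s) :
    HasCompactSupport (bump s : EuclideanSpace ℝ (Fin m) → ℝ) := by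
  refine HasCompactSupport.intro (isCompact_closedBall 0 1) fun y hy => ?_
  have hy : 1 < ‖y‖ := by simpa using hy
  rw [bump, max_eq_left (by nlinarith), zero_rpow hs.ne']

lemma integrable_mul_bump {m : ℕ} {s : ℝ} (hs : 0 < s) {p : EuclideanSpace ℝ (Fin m) → ℝ}
    (hp : Continuous p) : Integrable fun y => p y * bump s y :=
  (hp.mul (continuous_bump hs)).integrable_of_hasCompactSupport
    (hasCompactSupport_bump hs).mul_left

lemma integrable_bump {m : ℕ} {s : ℝ} (hs : 0 < s) :
    Integrable (bump s : EuclideanSpace ℝ (Fin m) → ℝ) :=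
  (continuous_bump hs).integrable_of_hasCompactSupport (hasCompactSupport_bump hs)

lemma integral_comp_mul_bump {m : ℕ} (s : ℝ)
    (U : EuclideanSpace ℝ (Fin m) ≃ₗᵢ[ℝ] EuclideanSpace ℝ (Fin m))
    (p : EuclideanSpace ℝ (Fin m) → ℝ) :
    ∫ y, p (U y) * bump s y = ∫ y, p y * bump s y := by
  simpa [bump] using (U.measurePreserving).integral_comp U.toHomeomorph.measurableEmbedding
    (fun y => p y * bump s y)

lemma integral_coord_mul_bump {m : ℕ} (s : ℝ) (i : Fin m) :
    ∫ y : EuclideanSpace ℝ (Fin m), y i * bump s y = 0 := by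
  have h := integral_comp_mul_bump s (LinearIsometryEquiv.neg ℝ) (fun y => y i)
  simp only [LinearIsometryEquiv.coe_neg, PiLp.neg_apply, neg_mul, integral_neg] at h
  linarith

/-- Mixed second moments vanish, by the reflection `y i ↦ -y i`. -/
lemma integral_coord_mul_coord_mul_bump_of_ne {m : ℕ} (s : ℝ) {i j : Fin m} (hij : i ≠ j) :
    ∫ y : EuclideanSpace ℝ (Fin m), y i * y j * bump s y = 0 := by
  have h := integral_comp_mul_bump s (LinearIsometryEquiv.piLpCongrRight 2 fun k : Fin m =>
    if k = i then LinearIsometryEquiv.neg ℝ (E := ℝ) else LinearIsometryEquiv.refl ℝ ℝ)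
    (fun y => y i * y j)
  simp [LinearIsometryEquiv.piLpCongrRight_apply, hij.symm, integral_neg] at h
  linarith

/-- Pure second moments agree, by swapping two coordinates. -/
lemma integral_coord_sq_mul_bump_eq {m : ℕ} (s : ℝ) (i j : Fin m) :
    ∫ y : EuclideanSpace ℝ (Fin m), y i * y i * bump s y
      = ∫ y : EuclideanSpace ℝ (Fin m), y j * y j * bump s y := by
  have h := integral_comp_mul_bump s
    (LinearIsometryEquiv.piLpCongrLeft 2 ℝ ℝ (Equiv.swap i j)) (fun y => y j * y j)
  simpa [LinearIsometryEquiv.piLpCongrLeft_apply, Equiv.piCongrLeft'] using h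

lemma integral_coord_sq_mul_bump {m : ℕ} (hm : 1 ≤ m) {s : ℝ} (hs : 0 < s) (i : Fin m) :
    ∫ y : EuclideanSpace ℝ (Fin m), y i * y i * bump s y = bumpMass m s / (2 * s + m + 2) := by
  have hm0 : (0 : ℝ) < m := by exact_mod_cast hm
  have h1 : ∀ y : EuclideanSpace ℝ (Fin m),
      ∑ j, y j * y j * bump s y = bump s y - bump (s + 1) y := by
    intro y
    rw [← Finset.sum_mul, show ∑ j, y j * y j = ‖y‖ ^ 2 by
      rw [EuclideanSpace.real_norm_sq_eq]; simp [sq]]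
    unfold bump
    rcases le_or_gt (1 - ‖y‖ ^ 2) 0 with h | h
    · rw [max_eq_left h, zero_rpow hs.ne', zero_rpow (by positivity)]
      simp
    · rw [max_eq_right h.le, rpow_add_one h.ne']
      ring
  have h2 : ∑ j : Fin m, ∫ y : EuclideanSpace ℝ (Fin m), y j * y j * bump s y
      = bumpMass m s - bumpMass m (s + 1) := by
    rw [← integral_finsetSum]
    · simp only [h1]
      rw [integral_sub (integrable_bump hs) (integrable_bump (by positivity)),
        integral_bump hm hs, integral_bump hm (by positivity)]
    · intro j _
      exact integrable_mul_bump hs (by fun_prop)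
  rw [Finset.sum_congr rfl fun j _ => integral_coord_sq_mul_bump_eq s j i, Finset.sum_const,
    Finset.card_univ, Fintype.card_fin, nsmul_eq_mul, bumpMass_add_one hm hs] at h2
  have h3 : (2 * s + m + 2) ≠ 0 := by positivity
  field_simp at h2 ⊢
  refine mul_left_cancel₀ hm0.ne' ?_
  linarith

/-! ### The Pearson II density -/

/-- Affine change of variables `x = a + S y`. -/
lemma integral_affine {m : ℕ} (S : Matrix (Fin m) (Fin m) ℝ) (hS : S.det ≠ 0)
    (a : EuclideanSpace ℝ (Fin m)) (g : EuclideanSpace ℝ (Fin m) → ℝ) :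
    ∫ x, g x = |S.det| * ∫ y, g (a + Matrix.toEuclideanLin S y) := by
  have hdet : LinearMap.det (Matrix.toEuclideanLin S) = S.det := by
    change LinearMap.det (Matrix.toLin (PiLp.basisFun 2 ℝ (Fin m)) (PiLp.basisFun 2 ℝ (Fin m)) S) = _
    rw [LinearMap.det_toLin]
  have hmap := Measure.map_linearMap_addHaar_eq_smul_addHaar
    (volume : Measure (EuclideanSpace ℝ (Fin m))) (f := Matrix.toEuclideanLin S) (by rwa [hdet])
  have hemb : MeasurableEmbedding (Matrix.toEuclideanLin S) :=
    (LinearEquiv.ofIsUnitDet (f := Matrix.toEuclideanLin S)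
      (v := PiLp.basisFun 2 ℝ (Fin m)) (v' := PiLp.basisFun 2 ℝ (Fin m)) (by
        rw [LinearMap.det_toMatrix, hdet]
        exact hS.isUnit)).toContinuousLinearEquiv.toHomeomorph.measurableEmbedding
  have h1 := hemb.integral_map (μ := volume) (fun x => g (a + x))
  rw [hmap, integral_smul_measure, hdet, integral_add_left_eq_self, ENNReal.toReal_ofReal (abs_nonneg _),
    smul_eq_mul, abs_inv] at h1
  rw [← h1, mul_inv_cancel_left₀ (abs_ne_zero.mpr hS)]

/-- The unnormalised Pearson II density `(1 - (x - a)ᵀ (S Sᵀ)⁻¹ (x - a))₊ ^ s` with centre `a` and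
scale matrix `S Sᵀ`, for `S` invertible. -/
noncomputable def pearson {m : ℕ} (S : Matrix (Fin m) (Fin m) ℝ) (a : EuclideanSpace ℝ (Fin m))
    (s : ℝ) (x : EuclideanSpace ℝ (Fin m)) : ℝ :=
  bump s (Matrix.toEuclideanLin S⁻¹ (x - a))

section pearson

variable {m : ℕ} {S : Matrix (Fin m) (Fin m) ℝ} {a : EuclideanSpace ℝ (Fin m)} {s : ℝ}

lemma toEuclideanLin_mul_inv (hS : S.det ≠ 0) (y : EuclideanSpace ℝ (Fin m)) :
    Matrix.toEuclideanLin S (Matrix.toEuclideanLin S⁻¹ y) = y := by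
  simp [Matrix.toLpLin_apply, Matrix.mulVec_mulVec, Matrix.mul_nonsing_inv _ hS.isUnit]

lemma toEuclideanLin_inv_mul (hS : S.det ≠ 0) (y : EuclideanSpace ℝ (Fin m)) :
    Matrix.toEuclideanLin S⁻¹ (Matrix.toEuclideanLin S y) = y := by
  simp [Matrix.toLpLin_apply, Matrix.mulVec_mulVec, Matrix.nonsing_inv_mul _ hS.isUnit]

lemma continuous_toEuclideanLin (S : Matrix (Fin m) (Fin m) ℝ) :
    Continuous (Matrix.toEuclideanLin S) :=
  LinearMap.continuous_of_finiteDimensional _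

lemma pearson_affine (hS : S.det ≠ 0) (y : EuclideanSpace ℝ (Fin m)) :
    pearson S a s (a + Matrix.toEuclideanLin S y) = bump s y := by
  rw [pearson, add_sub_cancel_left, toEuclideanLin_inv_mul hS]

lemma continuous_pearson (hs : 0 < s) : Continuous (pearson S a s) :=
  (continuous_bump hs).comp ((continuous_toEuclideanLin _).comp (continuous_id.sub continuous_const))

lemma hasCompactSupport_pearson (hS : S.det ≠ 0) (hs : 0 < s) :
    HasCompactSupport (pearson S a s) := by
  refine HasCompactSupport.intro ((hasCompactSupport_bump (m := m) hs).image
    (continuous_const.add (continuous_toEuclideanLin S) :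
      Continuous fun y => a + Matrix.toEuclideanLin S y)) fun x hx => ?_
  by_contra h
  refine hx ⟨Matrix.toEuclideanLin S⁻¹ (x - a), subset_tsupport _ h, ?_⟩
  change a + Matrix.toEuclideanLin S (Matrix.toEuclideanLin S⁻¹ (x - a)) = x
  rw [toEuclideanLin_mul_inv hS]
  abel

lemma integrable_mul_pearson (hS : S.det ≠ 0) (hs : 0 < s) {p : EuclideanSpace ℝ (Fin m) → ℝ}
    (hp : Continuous p) : Integrable fun x => p x * pearson S a s x :=
  (hp.mul (continuous_pearson hs)).integrable_of_hasCompactSupport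
    (hasCompactSupport_pearson hS hs).mul_left

lemma integrable_pearson (hS : S.det ≠ 0) (hs : 0 < s) : Integrable (pearson S a s) :=
  (continuous_pearson hs).integrable_of_hasCompactSupport (hasCompactSupport_pearson hS hs)

lemma integral_mul_pearson (hS : S.det ≠ 0) (p : EuclideanSpace ℝ (Fin m) → ℝ) :
    ∫ x, p x * pearson S a s x
      = |S.det| * ∫ y, p (a + Matrix.toEuclideanLin S y) * bump s y := by
  rw [integral_affine S hS a]
  simp only [pearson_affine hS]

lemma integral_pearson (hm : 1 ≤ m) (hS : S.det ≠ 0) (hs : 0 < s) :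
    ∫ x, pearson S a s x = |S.det| * bumpMass m s := by
  simpa [integral_bump hm hs] using integral_mul_pearson (a := a) (s := s) hS fun _ => 1

lemma toEuclideanLin_coord (S : Matrix (Fin m) (Fin m) ℝ) (y : EuclideanSpace ℝ (Fin m))
    (i : Fin m) : Matrix.toEuclideanLin S y i = ∑ k, S i k * y k := by
  simp [Matrix.toLpLin_apply, Matrix.mulVec, dotProduct]

lemma integral_centred_mul_pearson (hS : S.det ≠ 0) (hs : 0 < s) (i : Fin m) :
    ∫ x : EuclideanSpace ℝ (Fin m), (x i - a i) * pearson S a s x = 0 := by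
  rw [integral_mul_pearson (s := s) (a := a) hS (fun x => x i - a i)]
  simp only [PiLp.add_apply, add_sub_cancel_left, toEuclideanLin_coord, Finset.sum_mul, mul_assoc]
  rw [integral_finsetSum _ fun k _ => (integrable_mul_bump hs (by fun_prop)).const_mul _]
  simp [integral_const_mul, integral_coord_mul_bump]

lemma integral_cov_mul_pearson (hm : 1 ≤ m) (hS : S.det ≠ 0) (hs : 0 < s) (i j : Fin m) :
    ∫ x : EuclideanSpace ℝ (Fin m), (x i - a i) * (x j - a j) * pearson S a s x
      = |S.det| * bumpMass m s * ((S * Sᵀ) i j / (2 * s + m + 2)) := by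
  rw [integral_mul_pearson (s := s) (a := a) hS (fun x => (x i - a i) * (x j - a j))]
  have h1 : ∀ y : EuclideanSpace ℝ (Fin m),
      ((a + Matrix.toEuclideanLin S y) i - a i) * ((a + Matrix.toEuclideanLin S y) j - a j)
        * bump s y = ∑ k, ∑ l, (S i k * S j l) * (y k * y l * bump s y) := by
    intro y
    simp only [PiLp.add_apply, add_sub_cancel_left, toEuclideanLin_coord]
    rw [Finset.sum_mul_sum, Finset.sum_mul]
    refine Finset.sum_congr rfl fun k _ => ?_
    rw [Finset.sum_mul]
    exact Finset.sum_congr rfl fun l _ => by ring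
  have hint : ∀ k l : Fin m, Integrable fun y : EuclideanSpace ℝ (Fin m) =>
      (S i k * S j l) * (y k * y l * bump s y) := fun k l =>
    (integrable_mul_bump hs (by fun_prop)).const_mul _
  have h2 : ∀ k l : Fin m, ∫ y : EuclideanSpace ℝ (Fin m), y k * y l * bump s y
      = if k = l then bumpMass m s / (2 * s + m + 2) else 0 := by
    intro k l
    split_ifs with h
    · subst h
      exact integral_coord_sq_mul_bump hm hs k
    · exact integral_coord_mul_coord_mul_bump_of_ne s h
  simp only [h1]
  rw [integral_finsetSum _ fun k _ => integrable_finsetSum _ fun l _ => hint k l,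
    Finset.sum_congr rfl fun k _ => integral_finsetSum _ fun l _ => hint k l]
  simp only [integral_const_mul, h2, mul_ite, mul_zero, Finset.sum_ite_eq, Finset.mem_univ, if_true]
  rw [← Finset.sum_mul, Matrix.mul_apply]
  simp only [Matrix.transpose_apply]
  ring

end pearson

/-! ### Optimality and the maximum value -/

/-- The integral of the quadratic form `‖T (x - a)‖²` against `f` is determined by the second
moments of `f`, so it is the same for all densities of the class. -/
lemma integral_normSq_mul {m : ℕ} (T C : Matrix (Fin m) (Fin m) ℝ) (a : EuclideanSpace ℝ (Fin m))
    {f : EuclideanSpace ℝ (Fin m) → ℝ}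
    (hint : ∀ i j, Integrable
      (fun x : EuclideanSpace ℝ (Fin m) => (x i - a i) * (x j - a j) * f x))
    (hcov : ∀ i j, ∫ x : EuclideanSpace ℝ (Fin m), (x i - a i) * (x j - a j) * f x = C i j) :
    Integrable (fun x => ‖Matrix.toEuclideanLin T (x - a)‖ ^ 2 * f x) ∧
    ∫ x, ‖Matrix.toEuclideanLin T (x - a)‖ ^ 2 * f x
      = ∑ k, ∑ i, ∑ j, T k i * T k j * C i j := by
  have h1 : ∀ x, ‖Matrix.toEuclideanLin T (x - a)‖ ^ 2 * f x
      = ∑ k, ∑ i, ∑ j, T k i * T k j * ((x i - a i) * (x j - a j) * f x) := by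
    intro x
    rw [EuclideanSpace.real_norm_sq_eq, Finset.sum_mul]
    refine Finset.sum_congr rfl fun k _ => ?_
    rw [toEuclideanLin_coord, sq, Finset.sum_mul_sum, Finset.sum_mul]
    refine Finset.sum_congr rfl fun i _ => ?_
    rw [Finset.sum_mul]
    exact Finset.sum_congr rfl fun j _ => by simp only [PiLp.sub_apply]; ring
  have hi1 : ∀ k i, Integrable fun x : EuclideanSpace ℝ (Fin m) =>
      ∑ j, T k i * T k j * ((x i - a i) * (x j - a j) * f x) := fun k i =>
    integrable_finsetSum _ fun j _ => (hint i j).const_mul _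
  have hi2 : ∀ k, Integrable fun x : EuclideanSpace ℝ (Fin m) =>
      ∑ i, ∑ j, T k i * T k j * ((x i - a i) * (x j - a j) * f x) := fun k =>
    integrable_finsetSum _ fun i _ => hi1 k i
  simp only [h1]
  refine ⟨integrable_finsetSum _ fun k _ => hi2 k, ?_⟩
  rw [integral_finsetSum _ fun k _ => hi2 k]
  refine Finset.sum_congr rfl fun k _ => ?_
  rw [integral_finsetSum _ fun i _ => hi1 k i]
  refine Finset.sum_congr rfl fun i _ => ?_
  rw [integral_finsetSum _ fun j _ => (hint i j).const_mul _]
  exact Finset.sum_congr rfl fun j _ => by rw [integral_const_mul, hcov]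

/-- The tangent line inequality for `t ↦ t ^ q` at the Pearson II value `g = A (1 - u)₊ ^ γ`, with
the slope `q g ^ (q - 1)` replaced by `q A ^ (q - 1) (1 - u)`. The two agree for `u ≤ 1`; for
`1 < u` the replaced slope is negative and `g = 0`, so the inequality persists. -/
lemma rpow_tangent_s10 {A q γ u f : ℝ} (hA : 0 < A) (hq : 1 < q) (hγ : γ = 1 / (q - 1)) (hf : 0 ≤ f) :
    (A * (max 0 (1 - u)) ^ γ) ^ q
        + q * A ^ (q - 1) * ((1 - u) * f - (1 - u) * (A * (max 0 (1 - u)) ^ γ)) ≤ f ^ q := by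
  have hq1 : 0 < q - 1 := by linarith
  have hγ0 : 0 < γ := by rw [hγ]; positivity
  rcases le_or_gt (1 - u) 0 with h | h
  · rw [max_eq_left h, zero_rpow hγ0.ne', mul_zero, zero_rpow (by linarith)]
    have h1 : 0 ≤ q * A ^ (q - 1) := by positivity
    have h2 : (1 - u) * f ≤ 0 := mul_nonpos_of_nonpos_of_nonneg h hf
    have h3 : q * A ^ (q - 1) * ((1 - u) * f) ≤ 0 := mul_nonpos_of_nonneg_of_nonpos h1 h2
    have h4 : 0 ≤ f ^ q := rpow_nonneg hf _
    simpa using h3.trans h4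
  · rw [max_eq_right h.le]
    set g := A * (1 - u) ^ γ with hg
    have hg0 : 0 < g := by positivity
    have hgq : A ^ (q - 1) * (1 - u) = g ^ (q - 1) := by
      rw [hg, mul_rpow hA.le (by positivity), ← rpow_mul h.le, hγ, one_div,
        inv_mul_cancel₀ hq1.ne', rpow_one]
    -- The Bernoulli inequality for `f / g`, multiplied by `g ^ q`.
    have hb := one_add_mul_self_le_rpow_one_add (s := f / g - 1)
      (by linarith [div_nonneg hf hg0.le]) hq.le
    rw [add_sub_cancel, div_rpow hf hg0.le, le_div_iff₀ (by positivity)] at hb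
    have hgg : g ^ q = g ^ (q - 1) * g := by
      rw [← rpow_add_one hg0.ne', sub_add_cancel]
    refine le_trans (le_of_eq ?_) hb
    calc g ^ q + q * A ^ (q - 1) * ((1 - u) * f - (1 - u) * g)
        = g ^ q + q * (A ^ (q - 1) * (1 - u)) * (f - g) := by ring
      _ = (1 + q * (f / g - 1)) * g ^ q := by
        rw [hgq, hgg]
        field_simp

open scoped MatrixOrder in
lemma exists_mul_transpose_eq {m : ℕ} {M : Matrix (Fin m) (Fin m) ℝ} (hM : M.PosDef) :
    ∃ S : Matrix (Fin m) (Fin m) ℝ, S.det ≠ 0 ∧ S * Sᵀ = M := by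
  obtain ⟨B, hB⟩ := CStarAlgebra.nonneg_iff_eq_star_mul_self.mp hM.posSemidef.nonneg
  rw [Matrix.star_eq_conjTranspose, Matrix.conjTranspose_eq_transpose_of_trivial] at hB
  refine ⟨Bᵀ, fun h => hM.det_pos.ne' ?_, by rw [Matrix.transpose_transpose, hB]⟩
  rw [hB, Matrix.det_mul, h, zero_mul]

/-- The Rényi entropy of the normalised Pearson II density in closed form, where `D = (det Σ)^(1/2)`. -/
lemma renyi_value_eq {m : ℕ} (hm : 1 ≤ m) {q γ D : ℝ} (hq : 1 < q) (hγ : 0 < γ) (hD : 0 < D) :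
    1 / (1 - q) * Real.log ((1 / (D * bumpMass m γ)) ^ q * (D * bumpMass m (q * γ)))
      = Real.log D + (1 / (1 - q) *
          Real.log (realBeta (q * γ + 1) (m / 2) / realBeta (γ + 1) (m / 2) ^ q) +
        (m : ℝ) / 2 * Real.log π - Real.log (Real.Gamma (m / 2))) := by
  have hm0 : (0 : ℝ) < m := by exact_mod_cast hm
  have hq1 : 1 - q ≠ 0 := by linarith
  have hqγ : 0 < q * γ := by positivity
  have hG := Real.Gamma_pos_of_pos (show 0 < (m : ℝ) / 2 by positivity)
  have hbeta : ∀ s : ℝ, 0 < s → 0 < realBeta (s + 1) (m / 2) := fun s hs =>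
    ProbabilityTheory.beta_pos (by positivity) (by positivity)
  have hπ : 0 < √π ^ m := by positivity
  have hlogπ : Real.log (√π ^ m) = (m : ℝ) / 2 * Real.log π := by
    rw [Real.log_pow, Real.log_sqrt pi_pos.le]
    ring
  have hlog : ∀ s : ℝ, 0 < s → Real.log (bumpMass m s) = (m : ℝ) / 2 * Real.log π
      - Real.log (Real.Gamma (m / 2)) + Real.log (realBeta (s + 1) (m / 2)) := by
    intro s hs
    rw [bumpMass, Real.log_mul (by positivity) (hbeta s hs).ne', Real.log_div hπ.ne' hG.ne', hlogπ]
  have hb := bumpMass_pos hm hγ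
  have hb' := bumpMass_pos hm hqγ
  rw [Real.log_mul (by positivity) (by positivity), Real.log_rpow (by positivity), one_div (D * _),
    Real.log_inv, Real.log_mul hD.ne' hb.ne', Real.log_mul hD.ne' hb'.ne', hlog γ hγ,
    hlog _ hqγ, Real.log_div (hbeta _ hqγ).ne' (rpow_pos_of_pos (hbeta _ hγ) _).ne',
    Real.log_rpow (hbeta _ hγ)]
  field_simp
  ring

/-- **Maximum value of the Rényi entropy for `q > 1`.**
Over the class of probability densities on `ℝ^m` with mean `a` and covariance `C`
(symmetric positive definite, and such that `∫ f^q < ∞`), the maximum value of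
`H_q(f) = (1/(1-q)) log ∫ f^q` is `(1/2) log det Σ + c'_P(m,q,γ)` where
`γ = 1/(q−1)`, `Σ = (2γ + m + 2) C` and
`c'_P(m,q,γ) = (1/(1−q)) log[B(qγ+1, m/2)/B(γ+1, m/2)^q] + (m/2) log π − log Γ(m/2)`. -/
theorem renyi_entropy_max_value_pearsonII
    (m : ℕ) (hm : 1 ≤ m) (a : EuclideanSpace ℝ (Fin m))
    (C : Matrix (Fin m) (Fin m) ℝ) (hC : C.PosDef)
    (q : ℝ) (hq : 1 < q)
    (γ : ℝ) (hγ : γ = 1 / (q - 1))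
    (Sg : Matrix (Fin m) (Fin m) ℝ) (hSg : Sg = (2 * γ + m + 2) • C) :
    IsGreatest
      {h : ℝ | ∃ f : EuclideanSpace ℝ (Fin m) → ℝ,
        Measurable f ∧ (∀ x, 0 ≤ f x) ∧ Integrable f ∧ (∫ x, f x = 1) ∧
        (∀ i, Integrable (fun x : EuclideanSpace ℝ (Fin m) => x i * f x)) ∧
        (∀ i, ∫ x : EuclideanSpace ℝ (Fin m), x i * f x = a i) ∧
        (∀ i j, Integrable
          (fun x : EuclideanSpace ℝ (Fin m) => (x i - a i) * (x j - a j) * f x)) ∧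
        (∀ i j, ∫ x : EuclideanSpace ℝ (Fin m),
          (x i - a i) * (x j - a j) * f x = C i j) ∧
        Integrable (fun x => f x ^ q) ∧
        h = (1 / (1 - q)) * Real.log (∫ x, f x ^ q)}
      ((1 / 2) * Real.log Sg.det +
        ((1 / (1 - q)) *
            Real.log (realBeta (q * γ + 1) (m / 2) / realBeta (γ + 1) (m / 2) ^ q) +
          ((m : ℝ) / 2) * Real.log π - Real.log (Real.Gamma (m / 2)))) := by
  have hm0 : (0 : ℝ) < m := by exact_mod_cast hm
  have hq1 : 0 < q - 1 := by linarith
  have hγ0 : 0 < γ := by rw [hγ]; positivity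
  have hqγ : 0 < q * γ := by positivity
  have hc : 0 < 2 * γ + m + 2 := by positivity
  have hSgP : Sg.PosDef := hSg ▸ hC.smul hc
  obtain ⟨S, hS, hSS⟩ := exists_mul_transpose_eq hSgP
  have hD : 0 < |S.det| := abs_pos.mpr hS
  have hlogD : 1 / 2 * Real.log Sg.det = Real.log |S.det| := by
    rw [← hSS, Matrix.det_mul, Matrix.det_transpose, ← sq, Real.log_pow, Real.log_abs]
    push_cast
    ring
  have hmass := bumpMass_pos hm hγ0
  rw [hlogD, ← renyi_value_eq hm hq hγ0 hD]
  set A : ℝ := 1 / (|S.det| * bumpMass m γ) with hA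
  have hA0 : 0 < A := by positivity
  set g : EuclideanSpace ℝ (Fin m) → ℝ := fun x => A * pearson S a γ x with hg
  have hg0 : ∀ x, 0 ≤ g x := fun x => mul_nonneg hA0.le (bump_nonneg _ _)
  have hgI : Integrable g := (integrable_pearson hS hγ0).const_mul A
  have hg1 : ∫ x, g x = 1 := by
    rw [integral_const_mul, integral_pearson hm hS hγ0, hA]
    field_simp
  have hgp : ∀ p : EuclideanSpace ℝ (Fin m) → ℝ, Continuous p →
      Integrable (fun x => p x * g x) := fun p hp => by
    simpa only [hg, mul_left_comm] using (integrable_mul_pearson hS hγ0 hp).const_mul A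
  have hgpow : ∀ x, g x ^ q = A ^ q * pearson S a (q * γ) x := fun x => by
    simp only [hg, pearson, bump]
    rw [mul_rpow hA0.le (rpow_nonneg (le_max_left _ _) _), ← rpow_mul (le_max_left _ _), mul_comm γ q]
  have hgqI : Integrable (fun x => g x ^ q) := by
    simp only [hgpow]
    exact (integrable_pearson hS hqγ).const_mul _
  have hgq : ∫ x, g x ^ q = A ^ q * (|S.det| * bumpMass m (q * γ)) := by
    simp only [hgpow]
    rw [integral_const_mul, integral_pearson hm hS hqγ]
  have hcovI : ∀ i j, Integrable
      (fun x : EuclideanSpace ℝ (Fin m) => (x i - a i) * (x j - a j) * g x) := fun i j =>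
    hgp _ (by fun_prop)
  have hcov : ∀ i j, ∫ x : EuclideanSpace ℝ (Fin m),
      (x i - a i) * (x j - a j) * g x = C i j := fun i j => by
    simp only [hg, mul_left_comm _ A]
    rw [integral_const_mul, integral_cov_mul_pearson hm hS hγ0, hSS, hSg, hA, Matrix.smul_apply,
      smul_eq_mul]
    field_simp
  have hmeanI : ∀ i, Integrable (fun x : EuclideanSpace ℝ (Fin m) => x i * g x) := fun i =>
    hgp _ (by fun_prop)
  refine ⟨⟨g, (continuous_const.mul (continuous_pearson hγ0)).measurable, hg0, hgI, hg1, hmeanI,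
    fun i => ?_, hcovI, hcov, hgqI, by rw [hgq]⟩, ?_⟩
  · have h1 : ∫ x : EuclideanSpace ℝ (Fin m), (x i - a i) * g x = 0 := by
      simp only [hg, mul_left_comm _ A]
      rw [integral_const_mul, integral_centred_mul_pearson hS hγ0, mul_zero]
    simp only [sub_mul] at h1
    rw [integral_sub (hmeanI i) (hgI.const_mul _), integral_const_mul, hg1] at h1
    linarith
  · rintro h ⟨f, -, hf0, hfI, hf1, -, -, hfcovI, hfcov, hfqI, rfl⟩
    have key : ∫ x, g x ^ q ≤ ∫ x, f x ^ q := by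
      let u : EuclideanSpace ℝ (Fin m) → ℝ := fun x => ‖Matrix.toEuclideanLin S⁻¹ (x - a)‖ ^ 2
      obtain ⟨hfuI, hfu⟩ : Integrable (fun x => u x * f x) ∧ ∫ x, u x * f x = _ :=
        integral_normSq_mul S⁻¹ C a hfcovI hfcov
      obtain ⟨hguI, hgu⟩ : Integrable (fun x => u x * g x) ∧ ∫ x, u x * g x = _ :=
        integral_normSq_mul S⁻¹ C a hcovI hcov
      have hfu' : Integrable fun x => f x - u x * f x := hfI.sub hfuI
      have hgu' : Integrable fun x => g x - u x * g x := hgI.sub hguI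
      have hI : Integrable fun x => q * A ^ (q - 1) * ((f x - u x * f x) - (g x - u x * g x)) :=
        (hfu'.sub hgu').const_mul _
      have hle : ∫ x, (g x ^ q + q * A ^ (q - 1) * ((f x - u x * f x) - (g x - u x * g x)))
          ≤ ∫ x, f x ^ q := by
        refine integral_mono (hgqI.add hI) hfqI fun x => ?_
        have ht := rpow_tangent_s10 (u := u x) hA0 hq hγ (hf0 x)
        rw [sub_mul, sub_mul, one_mul, one_mul] at ht
        exact ht
      have hz : ∫ x, q * A ^ (q - 1) * ((f x - u x * f x) - (g x - u x * g x)) = 0 := by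
        rw [integral_const_mul, integral_sub hfu' hgu',
          integral_sub hfI hfuI, integral_sub hgI hguI, hf1, hg1, hfu, hgu, sub_self, mul_zero]
      rwa [integral_add hgqI hI, hz, add_zero] at hle
    have hpos : 0 < A ^ q * (|S.det| * bumpMass m (q * γ)) :=
      mul_pos (rpow_pos_of_pos hA0 _) (mul_pos hD (bumpMass_pos hm hqγ))
    rw [hgq] at key
    exact mul_le_mul_of_nonpos_left (Real.log_le_log hpos key)
      (one_div_nonpos.mpr (by linarith))
end

section
/- (Lemma 5.) Let f be a probability density on ℝ^m and let 0 < s < m. If the critical moment satisfies r_c(f) > ms/(m−s), then Σ_{j=1}^∞ 2^{js} [P(A_j)]^{(m−s)/m} < ∞, where P(A_j) = ∫_{A_j} f(x) dx and A_j = B(0, 2^{j+1}) \ B(0, 2^j) for j ≥ 1, with B(0,R) = {x ∈ ℝ^m : ‖x‖ ≤ R}. -/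
/-!
The hypothesis on the critical moment yields some `r > ms/(m-s)` with finite moment
`C = ∫ ‖x‖ ^ r f(x) dx`. Markov's inequality gives `P(A_j) ≤ C 2^{-jr}`, so with
`a = (m-s)/m` the `j`-th term is at most `C ^ a 2^{j(s - ra)}`. Since `s - ra < 0`, this is
a convergent geometric series.
-/

open MeasureTheory Real Metric
open scoped ENNReal

/-- The critical moment `r_c(f) = sup{r > 0 : ∫ ‖x‖^r f(x) dx < ∞}` of a density `f`,
with value in `ℝ≥0∞` (it is `∞` when all moments are finite). -/
noncomputable def criticalMoment (m : ℕ) (f : EuclideanSpace ℝ (Fin m) → ℝ) : ℝ≥0∞ :=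
  ⨆ (r : ℝ) (_ : 0 < r ∧ ∫⁻ x, ENNReal.ofReal (‖x‖ ^ r * f x) < ⊤), ENNReal.ofReal r

/-- **Lemma 5.**  Let `f` be a probability density on `ℝ^m` and `0 < s < m`.
If `r_c(f) > ms/(m−s)` then `Σ_{j=1}^∞ 2^{js} [P(A_j)]^{(m−s)/m} < ∞`, where
`A_j = B(0,2^{j+1}) \ B(0,2^j)` and `P(A_j) = ∫_{A_j} f`.
(The summation index below runs over `j ∈ ℕ`, with `j + 1` playing the role of
the index `j ≥ 1` of the lemma.) -/
theorem annuli_series_summable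
    (m : ℕ) (hm : 1 ≤ m) (f : EuclideanSpace ℝ (Fin m) → ℝ)
    (hf_meas : Measurable f) (hf_nonneg : ∀ x, 0 ≤ f x)
    (hf_int : Integrable f) (hf_prob : ∫ x, f x = 1)
    (s : ℝ) (hs0 : 0 < s) (hsm : s < m)
    (hrc : ENNReal.ofReal ((m : ℝ) * s / ((m : ℝ) - s)) < criticalMoment m f) :
    Summable (fun j : ℕ =>
      (2 : ℝ) ^ (((j : ℝ) + 1) * s) *
        (∫ x in (closedBall (0 : EuclideanSpace ℝ (Fin m)) (2 ^ (j + 2)) \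
            closedBall (0 : EuclideanSpace ℝ (Fin m)) (2 ^ (j + 1))), f x) ^
          (((m : ℝ) - s) / m)) := by
  obtain ⟨r, ⟨hr0, hr⟩, hlt⟩ : ∃ r : ℝ,
      (0 < r ∧ ∫⁻ x, ENNReal.ofReal (‖x‖ ^ r * f x) < ⊤) ∧
        (m : ℝ) * s / ((m : ℝ) - s) < r := by
    unfold criticalMoment at hrc
    simp only [lt_iSup_iff] at hrc
    obtain ⟨r, h, hlt⟩ := hrc
    exact ⟨r, h, (ENNReal.ofReal_lt_ofReal_iff h.1).1 hlt⟩
  have hm0 : (0 : ℝ) < m := hs0.trans hsm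
  have hms : 0 < (m : ℝ) - s := sub_pos.2 hsm
  set a : ℝ := ((m : ℝ) - s) / m with ha
  have ha0 : 0 < a := div_pos hms hm0
  have hexp : s - r * a < 0 := by
    rw [div_lt_iff₀ hms] at hlt
    rw [ha, sub_neg, ← mul_div_assoc, lt_div_iff₀ hm0]
    linarith
  have hnn : ∀ x : EuclideanSpace ℝ (Fin m), 0 ≤ ‖x‖ ^ r * f x := fun x =>
    mul_nonneg (rpow_nonneg (norm_nonneg x) r) (hf_nonneg x)
  have hmom : Integrable fun x : EuclideanSpace ℝ (Fin m) => ‖x‖ ^ r * f x := by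
    refine ⟨((measurable_norm.pow_const r).mul hf_meas).aestronglyMeasurable, ?_⟩
    rwa [hasFiniteIntegral_iff_ofReal (Filter.Eventually.of_forall hnn)]
  set C : ℝ := ∫ x, ‖x‖ ^ r * f x with hC
  have hC0 : 0 ≤ C := integral_nonneg hnn
  have hP0 : ∀ j : ℕ, 0 ≤ ∫ x in (closedBall (0 : EuclideanSpace ℝ (Fin m)) (2 ^ (j + 2)) \
      closedBall (0 : EuclideanSpace ℝ (Fin m)) (2 ^ (j + 1))), f x :=
    fun j => integral_nonneg hf_nonneg
  -- On the annulus `‖x‖ ^ r ≥ 2 ^ ((j + 1) * r)`, so Markov's inequality applies.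
  have hmarkov : ∀ j : ℕ, ∫ x in (closedBall (0 : EuclideanSpace ℝ (Fin m)) (2 ^ (j + 2)) \
      closedBall (0 : EuclideanSpace ℝ (Fin m)) (2 ^ (j + 1))), f x
        ≤ (2 : ℝ) ^ (-(((j : ℝ) + 1) * r)) * C := by
    intro j
    rw [hC, ← integral_const_mul]
    refine (setIntegral_mono_on hf_int.integrableOn (hmom.const_mul _).integrableOn
      (measurableSet_closedBall.diff measurableSet_closedBall) ?_).trans
      (setIntegral_le_integral (hmom.const_mul _)
        (Filter.Eventually.of_forall fun x => mul_nonneg (by positivity) (hnn x)))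
    intro x hx
    have hxn : (2 : ℝ) ^ (j + 1) ≤ ‖x‖ := by
      have := hx.2
      rw [mem_closedBall_zero_iff, not_le] at this
      exact this.le
    have hpow : (2 : ℝ) ^ (((j : ℝ) + 1) * r) ≤ ‖x‖ ^ r := by
      have := rpow_le_rpow (by positivity) hxn hr0.le
      rwa [← rpow_natCast, ← rpow_mul zero_le_two, Nat.cast_add, Nat.cast_one] at this
    have hone : 1 ≤ (2 : ℝ) ^ (-(((j : ℝ) + 1) * r)) * ‖x‖ ^ r := by
      rw [rpow_neg zero_le_two, inv_mul_eq_div, one_le_div (by positivity)]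
      exact hpow
    rw [← mul_assoc]
    exact le_mul_of_one_le_left (hf_nonneg x) hone
  have hgeom : Summable fun j : ℕ =>
      C ^ a * (2 : ℝ) ^ (s - r * a) * ((2 : ℝ) ^ (s - r * a)) ^ j :=
    (summable_geometric_of_lt_one (by positivity)
      (rpow_lt_one_of_one_lt_of_neg one_lt_two hexp)).mul_left _
  refine Summable.of_nonneg_of_le
    (fun j => mul_nonneg (by positivity) (rpow_nonneg (hP0 j) _)) (fun j => ?_) hgeom
  refine (mul_le_mul_of_nonneg_left (rpow_le_rpow (hP0 j) (hmarkov j) ha0.le)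
    (by positivity)).trans_eq ?_
  rw [mul_rpow (by positivity) hC0, ← rpow_mul zero_le_two, ← rpow_natCast (_ ^ (s - r * a)),
    ← rpow_mul zero_le_two, ← mul_assoc, ← rpow_add two_pos, mul_assoc (C ^ a),
    ← rpow_add two_pos, mul_comm (C ^ a)]
  congr 2
  ring
end

section
/- (Subadditivity of the k-nearest-neighbour power sum.) Fix integers m ≥ 1, k ≥ 1 and a real b > 0. For every t > 0 and all finite point sets X, Y ⊂ [0,t]^m, L_k^b(X ∪ Y) ≤ L_k^b(X) + L_k^b(Y) + 2k m^{b/2} t^b. -/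
/-!
Adding points to `X` can only shrink the `k`-nearest-neighbour distances, provided `X` already
has more than `k` points (`nnDistSet_mono`). If `X` has at most `k` points, each of them
contributes at most `d ^ b`, where `d` bounds the diameter of the ambient set. Either way
`∑_{x ∈ X} D_k(x, X ∪ Y) ^ b ≤ L_k^b(X) + k d ^ b` (`sum_nnDistSet_le`). Adding this to its
mirror image for `Y` gives the claim, as the cube `[0,t]^m` has diameter at most `√m t`.
-/

open Real
open scoped Classical

/-- The distance from `x` to its `k`-nearest neighbour in the finite point set
`X \ {x}`: the `k`-th smallest of the distances from `x` to the other points of `X`,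
realised as the infimum of radii containing at least `k` of them; it is `0` when
`card X ≤ k`. -/
noncomputable def nnDistSet {E : Type*} [MetricSpace E] (k : ℕ) (x : E)
    (X : Finset E) : ℝ :=
  if k < X.card then
    sInf {r : ℝ | k ≤ Set.ncard {y | y ∈ X ∧ y ≠ x ∧ dist x y ≤ r}}
  else 0

/-- The `k`-nearest-neighbour power sum `L_k^b(X) = Σ_{x ∈ X} D_k(x,X)^b`. -/
noncomputable def nnPowerSum {E : Type*} [MetricSpace E] (k : ℕ) (b : ℝ)
    (X : Finset E) : ℝ :=
  ∑ x ∈ X, nnDistSet k x X ^ b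

/-- For `k ≥ 1` only nonnegative radii contain `k` neighbours, so the infimum in `nnDistSet`
is not a junk value. -/
lemma nonneg_of_le_ncard {E : Type*} [MetricSpace E] {k : ℕ} (hk : 1 ≤ k) {x : E}
    {X : Finset E} {r : ℝ} (hr : k ≤ Set.ncard {y | y ∈ X ∧ y ≠ x ∧ dist x y ≤ r}) :
    0 ≤ r := by
  have hne : ({y | y ∈ X ∧ y ≠ x ∧ dist x y ≤ r} : Set E).Nonempty :=
    Set.nonempty_of_ncard_ne_zero (by omega)
  obtain ⟨y, -, -, hy⟩ := hne
  exact dist_nonneg.trans hy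

lemma nnDistSet_nonneg {E : Type*} [MetricSpace E] {k : ℕ} (hk : 1 ≤ k) (x : E)
    (X : Finset E) : 0 ≤ nnDistSet k x X := by
  unfold nnDistSet
  split_ifs
  · exact Real.sInf_nonneg fun r hr => nonneg_of_le_ncard hk hr
  · exact le_rfl

lemma le_ncard_of_dist_le {E : Type*} [MetricSpace E] {k : ℕ} {x : E} {X : Finset E}
    (hc : k < X.card) {d : ℝ} (hd : ∀ y ∈ X, dist x y ≤ d) :
    k ≤ Set.ncard {y | y ∈ X ∧ y ≠ x ∧ dist x y ≤ d} := by
  have he : ({y | y ∈ X ∧ y ≠ x ∧ dist x y ≤ d} : Set E) = ↑(X.erase x) := by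
    ext y
    simp only [Set.mem_ofPred_eq, Finset.coe_erase, Set.mem_sdiff, Finset.mem_coe,
      Set.mem_singleton_iff]
    exact ⟨fun h => ⟨h.1, h.2.1⟩, fun h => ⟨h.1, h.2, hd y h.1⟩⟩
  rw [he, Set.ncard_coe_finset]
  have := Finset.pred_card_le_card_erase (s := X) (a := x)
  omega

lemma nnDistSet_le {E : Type*} [MetricSpace E] {k : ℕ} (hk : 1 ≤ k) {x : E}
    {X : Finset E} {d : ℝ} (hd0 : 0 ≤ d) (hd : ∀ y ∈ X, dist x y ≤ d) :
    nnDistSet k x X ≤ d := by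
  unfold nnDistSet
  split_ifs with hc
  · exact csInf_le ⟨0, fun r hr => nonneg_of_le_ncard hk hr⟩ (le_ncard_of_dist_le hc hd)
  · exact hd0

/-- The hypothesis `k < X.card` cannot be dropped: otherwise `nnDistSet k x X = 0`. -/
lemma nnDistSet_mono {E : Type*} [MetricSpace E] {k : ℕ} (hk : 1 ≤ k) {x : E}
    {X Z : Finset E} (hXZ : X ⊆ Z) (hc : k < X.card) {d : ℝ}
    (hd : ∀ y ∈ X, dist x y ≤ d) : nnDistSet k x Z ≤ nnDistSet k x X := by
  unfold nnDistSet
  rw [if_pos hc, if_pos (hc.trans_le (Finset.card_le_card hXZ))]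
  refine csInf_le_csInf ⟨0, fun r hr => nonneg_of_le_ncard hk hr⟩
    ⟨d, le_ncard_of_dist_le hc hd⟩ fun r hr => ?_
  rw [Set.mem_ofPred_eq] at hr ⊢
  refine hr.trans ?_
  exact Set.ncard_le_ncard (fun y hy => ⟨hXZ hy.1, hy.2⟩)
    (Z.finite_toSet.subset fun y hy => hy.1)

/-- Passing from `X` to a larger set `Z` increases the power sum over the points of `X` by at
most `k d ^ b`; the error term is only needed when `X` has at most `k` points. -/
lemma sum_nnDistSet_le {E : Type*} [MetricSpace E] {k : ℕ} (hk : 1 ≤ k) {b : ℝ} (hb : 0 < b)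
    {X Z : Finset E} (hXZ : X ⊆ Z) {d : ℝ} (hd0 : 0 ≤ d)
    (hd : ∀ x ∈ Z, ∀ y ∈ Z, dist x y ≤ d) :
    ∑ x ∈ X, nnDistSet k x Z ^ b ≤ nnPowerSum k b X + k * d ^ b := by
  have hdb : 0 ≤ d ^ b := Real.rpow_nonneg hd0 b
  by_cases hc : k < X.card
  · have h : ∑ x ∈ X, nnDistSet k x Z ^ b ≤ nnPowerSum k b X :=
      Finset.sum_le_sum fun x hx => Real.rpow_le_rpow (nnDistSet_nonneg hk x Z)
        (nnDistSet_mono hk hXZ hc fun y hy => hd x (hXZ hx) y (hXZ hy)) hb.le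
    have : 0 ≤ (k : ℝ) * d ^ b := by positivity
    linarith
  · have h : ∑ x ∈ X, nnDistSet k x Z ^ b ≤ X.card • d ^ b :=
      Finset.sum_le_card_nsmul _ _ _ fun x hx => Real.rpow_le_rpow (nnDistSet_nonneg hk x Z)
        (nnDistSet_le hk hd0 (hd x (hXZ hx))) hb.le
    rw [nsmul_eq_mul] at h
    have h1 : (X.card : ℝ) * d ^ b ≤ k * d ^ b := by
      gcongr
      omega
    have h2 : 0 ≤ nnPowerSum k b X :=
      Finset.sum_nonneg fun x _ => Real.rpow_nonneg (nnDistSet_nonneg hk x X) b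
    linarith

lemma dist_le_of_mem_cube {m : ℕ} {t : ℝ} (ht : 0 < t) {p q : EuclideanSpace ℝ (Fin m)}
    (hp : ∀ i, p i ∈ Set.Icc 0 t) (hq : ∀ i, q i ∈ Set.Icc 0 t) :
    dist p q ≤ √m * t := by
  rw [EuclideanSpace.dist_eq, Real.sqrt_le_left (by positivity), mul_pow,
    Real.sq_sqrt (Nat.cast_nonneg m)]
  calc ∑ i, dist (p i) (q i) ^ 2 ≤ ∑ _i : Fin m, t ^ 2 := by
        gcongr with i
        rw [Real.dist_eq, abs_le]
        exact ⟨by linarith [(hp i).1, (hq i).2], by linarith [(hp i).2, (hq i).1]⟩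
    _ = m * t ^ 2 := by simp

/-- **Subadditivity of the `k`-nearest-neighbour power sum.**
For integers `m, k ≥ 1`, a real `b > 0`, every `t > 0` and all finite point sets
`X, Y ⊂ [0,t]^m`,
`L_k^b(X ∪ Y) ≤ L_k^b(X) + L_k^b(Y) + 2 k m^{b/2} t^b`. -/
theorem nnPowerSum_subadditive
    (m : ℕ) (hm : 1 ≤ m) (k : ℕ) (hk : 1 ≤ k) (b : ℝ) (hb : 0 < b)
    (t : ℝ) (ht : 0 < t)
    (X Y : Finset (EuclideanSpace ℝ (Fin m)))
    (hX : ∀ p ∈ X, ∀ i, p i ∈ Set.Icc 0 t)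
    (hY : ∀ p ∈ Y, ∀ i, p i ∈ Set.Icc 0 t) :
    nnPowerSum k b (X ∪ Y) ≤
      nnPowerSum k b X + nnPowerSum k b Y +
        2 * k * (m : ℝ) ^ (b / 2) * t ^ b := by
  have hZ : ∀ p ∈ X ∪ Y, ∀ i, p i ∈ Set.Icc 0 t := fun p hp =>
    (Finset.mem_union.1 hp).elim (hX p) (hY p)
  have hd : ∀ p ∈ X ∪ Y, ∀ q ∈ X ∪ Y, dist p q ≤ √m * t := fun p hp q hq =>
    dist_le_of_mem_cube ht (hZ p hp) (hZ q hq)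
  have hd0 : 0 ≤ √m * t := by positivity
  have hpow : (√m * t) ^ b = (m : ℝ) ^ (b / 2) * t ^ b := by
    rw [Real.mul_rpow (Real.sqrt_nonneg _) ht.le, Real.sqrt_eq_rpow,
      ← Real.rpow_mul (Nat.cast_nonneg m)]
    congr 2
    ring
  have h1 := sum_nnDistSet_le hk hb Finset.subset_union_left hd0 hd
  have h2 := sum_nnDistSet_le hk hb Finset.subset_union_right hd0 hd
  -- Points of `X ∩ Y` are counted twice on the right-hand side.
  have h3 : nnPowerSum k b (X ∪ Y) ≤
      ∑ x ∈ X, nnDistSet k x (X ∪ Y) ^ b + ∑ x ∈ Y, nnDistSet k x (X ∪ Y) ^ b := by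
    rw [← Finset.sum_union_inter]
    exact le_add_of_nonneg_right
      (Finset.sum_nonneg fun x _ => Real.rpow_nonneg (nnDistSet_nonneg hk x _) b)
  rw [hpow] at h1 h2
  linarith
end

section
/- For every a ∈ ℝ^m, every symmetric positive definite m×m matrix Σ, and every x ∈ ℝ^m, the multivariate Pearson Type II density converges pointwise to the multivariate Gaussian density as the shape parameter tends to infinity when the scale matrix is chosen so that the covariance is held fixed equal to C = Σ, i.e. with Σ_γ = (m + 2γ + 2) Σ one has f^P_{a,Σ_γ,γ}(x) → f^G_{a,Σ}(x) as γ → ∞. -/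
/-!
The covariance scaling replaces `S` by `c • S` with `c = m + 2γ + 2`, so the Mahalanobis form is
divided by `c` and the determinant is multiplied by `c ^ m`. The Pearson density thus factors into
three parts.

* `(1 - q / c) ^ γ → exp (-q / 2)`, because `γ / c → 1 / 2`; the truncation at `0` is eventually
  inactive.
* `Γ(γ + 1 + m / 2) / (Γ(γ + 1) (γ + 1) ^ (m / 2)) → 1` (`tendsto_Gamma_add_half_nat`). For `m = 1`
  this follows by squeezing: log-convexity gives `Γ(y + 1/2) ≤ √y Γ(y)`, and the same bound at
  `y + 1/2` together with `Γ(y + 1) = y Γ(y)` gives the lower bound. The general case is an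
  induction in steps of `1/2`.
* `((γ + 1) / c) ^ (m / 2) → 2 ^ (-m / 2)`, which combines with `π ^ (-m / 2)` to the Gaussian
  constant.
-/

open MeasureTheory Real Matrix Filter Topology

/-- The multivariate Gaussian density
`f^G_{a,S}(x) = (2π)^{-m/2} (det S)^{-1/2} exp(−(1/2)(x−a)ᵀ S⁻¹ (x−a))`. -/
noncomputable def gaussPdf (m : ℕ) (a : EuclideanSpace ℝ (Fin m))
    (S : Matrix (Fin m) (Fin m) ℝ) (x : EuclideanSpace ℝ (Fin m)) : ℝ :=
  (2 * π) ^ (-(m : ℝ) / 2) * S.det ^ (-(1 : ℝ) / 2) *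
    Real.exp (-(1 / 2) * mahalanobis m S a x)

/-- Midpoint log-convexity of `Γ` between `y` and `y + 1`. -/
lemma Gamma_add_half_le {y : ℝ} (hy : 0 < y) :
    Real.Gamma (y + 1 / 2) ≤ √y * Real.Gamma y := by
  have h := Real.Gamma_mul_add_mul_le_rpow_Gamma_mul_rpow_Gamma (s := y) (t := y + 1)
    (a := 1 / 2) (b := 1 / 2) hy (by linarith) (by norm_num) (by norm_num) (by norm_num)
  have hG := Real.Gamma_pos_of_pos hy
  rw [Real.Gamma_add_one hy.ne', ← Real.sqrt_eq_rpow, ← Real.sqrt_eq_rpow,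
    Real.sqrt_mul hy.le] at h
  calc Real.Gamma (y + 1 / 2) = Real.Gamma (1 / 2 * y + 1 / 2 * (y + 1)) := by
        congr 1; ring
    _ ≤ √(Real.Gamma y) * (√y * √(Real.Gamma y)) := h
    _ = √y * (√(Real.Gamma y) * √(Real.Gamma y)) := by ring
    _ = √y * Real.Gamma y := by rw [Real.mul_self_sqrt hG.le]

lemma tendsto_add_div_self (b : ℝ) :
    Tendsto (fun y : ℝ => (y + b) / y) atTop (𝓝 1) := by
  have h : Tendsto (fun y : ℝ => 1 + b / y) atTop (𝓝 (1 + 0)) :=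
    tendsto_const_nhds.add (tendsto_const_nhds.div_atTop tendsto_id)
  rw [add_zero] at h
  refine h.congr' ?_
  filter_upwards [eventually_gt_atTop 0] with y hy
  field_simp

lemma tendsto_Gamma_add_half :
    Tendsto (fun y : ℝ => Real.Gamma (y + 1 / 2) / (Real.Gamma y * √y)) atTop (𝓝 1) := by
  have hlow : Tendsto (fun y : ℝ => (√((y + 1 / 2) / y))⁻¹) atTop (𝓝 1) := by
    simpa using ((tendsto_add_div_self (1 / 2)).sqrt).inv₀ (by simp)
  refine tendsto_of_tendsto_of_tendsto_of_le_of_le' hlow tendsto_const_nhds ?_ ?_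
  · filter_upwards [eventually_gt_atTop 0] with y hy
    have hG := Real.Gamma_pos_of_pos hy
    have hs : 0 < √y := Real.sqrt_pos.2 hy
    have hy2 : 0 < y + 1 / 2 := by linarith
    have ht : 0 < √(y + 1 / 2) := Real.sqrt_pos.2 hy2
    have h := Gamma_add_half_le hy2
    rw [show y + 1 / 2 + 1 / 2 = y + 1 by ring, Real.Gamma_add_one hy.ne'] at h
    rw [Real.sqrt_div hy2.le, inv_div, div_le_div_iff₀ ht (by positivity)]
    calc √y * (Real.Gamma y * √y) = (√y * √y) * Real.Gamma y := by ring
      _ = y * Real.Gamma y := by rw [Real.mul_self_sqrt hy.le]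
      _ ≤ _ := by rw [mul_comm (Real.Gamma _)]; exact h
  · filter_upwards [eventually_gt_atTop 0] with y hy
    have hG := Real.Gamma_pos_of_pos hy
    have hs : 0 < √y := Real.sqrt_pos.2 hy
    rw [div_le_one (by positivity), mul_comm]
    exact Gamma_add_half_le hy

lemma tendsto_Gamma_add_half_nat (k : ℕ) :
    Tendsto (fun y : ℝ => Real.Gamma (y + k / 2) / (Real.Gamma y * √y ^ k)) atTop (𝓝 1) := by
  induction k with
  | zero =>
    refine tendsto_const_nhds.congr' ?_
    filter_upwards [eventually_gt_atTop 0] with y hy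
    have hG := Real.Gamma_pos_of_pos hy
    simp [hG.ne']
  | succ k ih =>
    have h1 : Tendsto (fun y : ℝ => y + (k : ℝ) / 2) atTop atTop :=
      tendsto_atTop_add_const_right _ _ tendsto_id
    have h2 := (ih.mul (tendsto_Gamma_add_half.comp h1)).mul
      (tendsto_add_div_self ((k : ℝ) / 2)).sqrt
    simp only [mul_one, Real.sqrt_one] at h2
    refine h2.congr' ?_
    filter_upwards [eventually_gt_atTop 0] with y hy
    have hyk : 0 < y + (k : ℝ) / 2 := by positivity
    have hG := Real.Gamma_pos_of_pos hy
    have hGk := Real.Gamma_pos_of_pos hyk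
    have hs : 0 < √y := Real.sqrt_pos.2 hy
    have ht : 0 < √(y + (k : ℝ) / 2) := Real.sqrt_pos.2 hyk
    have e : y + ((k + 1 : ℕ) : ℝ) / 2 = y + (k : ℝ) / 2 + 1 / 2 := by push_cast; ring
    rw [e, Function.comp_apply, Real.sqrt_div hyk.le]
    generalize Real.Gamma (y + (k : ℝ) / 2 + 1 / 2) = A at *
    generalize Real.Gamma (y + (k : ℝ) / 2) = B at *
    generalize √(y + (k : ℝ) / 2) = C at *
    field_simp
    ring

lemma mahalanobis_smul (m : ℕ) (S : Matrix (Fin m) (Fin m) ℝ) (hS : S.PosDef)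
    (a x : EuclideanSpace ℝ (Fin m)) {c : ℝ} (hc : c ≠ 0) :
    mahalanobis m (c • S) a x = mahalanobis m S a x / c := by
  have hu : IsUnit S.det := hS.det_pos.ne'.isUnit
  let := invertibleOfNonzero hc
  rw [mahalanobis, mahalanobis, Matrix.inv_smul S c hu, Matrix.smul_mulVec, dotProduct_smul,
    invOf_eq_inv, smul_eq_mul, div_eq_inv_mul]

lemma tendsto_shape_div_scale (m : ℕ) :
    Tendsto (fun γ : ℝ => (γ + 1) / ((m : ℝ) + 2 * γ + 2)) atTop (𝓝 (1 / 2)) := by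
  have h := (((tendsto_add_div_self ((m : ℝ) / 2)).comp
    (tendsto_atTop_add_const_right atTop (1 : ℝ) tendsto_id)).inv₀ one_ne_zero).const_mul (1 / 2)
  simp only [inv_one, mul_one] at h
  refine h.congr' ?_
  filter_upwards [eventually_gt_atTop 0] with γ hγ
  simp only [Function.comp_apply, id]
  field_simp
  ring

lemma tendsto_scale_inv (m : ℕ) (q : ℝ) :
    Tendsto (fun γ : ℝ => q / ((m : ℝ) + 2 * γ + 2)) atTop (𝓝 0) := by
  refine tendsto_const_nhds.div_atTop ?_
  refine tendsto_atTop_add_const_right _ _ (tendsto_atTop_add_const_left _ _ ?_)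
  exact tendsto_id.const_mul_atTop (by norm_num)

lemma tendsto_kernel (m : ℕ) (q : ℝ) :
    Tendsto (fun γ : ℝ => (max (1 - q / ((m : ℝ) + 2 * γ + 2)) 0) ^ γ) atTop
      (𝓝 (Real.exp (-(1 / 2) * q))) := by
  have hg : Tendsto (fun γ : ℝ => γ * (-(q / ((m : ℝ) + 2 * γ + 2)))) atTop
      (𝓝 (-(1 / 2) * q)) := by
    have h := ((tendsto_shape_div_scale m).mul_const (-q)).add (tendsto_scale_inv m q)
    rw [show (1 / 2 : ℝ) * -q + 0 = -(1 / 2) * q by ring] at h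
    refine h.congr fun γ => ?_
    ring
  refine (Real.tendsto_one_add_rpow_exp_of_tendsto hg).congr' ?_
  filter_upwards [(tendsto_scale_inv m q).eventually_lt_const one_pos] with γ hγ
  rw [max_eq_left (by linarith), sub_eq_add_neg]

/-- **Pointwise convergence of the Pearson Type II density to the Gaussian density.**
For every `a ∈ ℝ^m`, symmetric positive definite `Σ` and every `x ∈ ℝ^m`, with the
scaling `Σ_γ = (m + 2γ + 2) Σ` keeping the covariance fixed equal to `Σ`,
`f^P_{a,Σ_γ,γ}(x) → f^G_{a,Σ}(x)` as `γ → ∞`. -/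
theorem pearsonPdf_tendsto_gaussPdf
    (m : ℕ) (hm : 1 ≤ m) (a : EuclideanSpace ℝ (Fin m))
    (S : Matrix (Fin m) (Fin m) ℝ) (hS : S.PosDef)
    (x : EuclideanSpace ℝ (Fin m)) :
    Tendsto (fun γ : ℝ => pearsonPdf m a (((m : ℝ) + 2 * γ + 2) • S) γ x)
      atTop (nhds (gaussPdf m a S x)) := by
  have h1 : Tendsto (fun γ : ℝ => γ + 1) atTop atTop :=
    tendsto_atTop_add_const_right _ _ tendsto_id
  have h := (((((tendsto_Gamma_add_half_nat m).comp h1).mul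
    ((tendsto_shape_div_scale m).sqrt.pow m)).mul_const
      ((π ^ ((m : ℝ) / 2))⁻¹ * S.det ^ (-(1 : ℝ) / 2)))).mul
        (tendsto_kernel m (mahalanobis m S a x))
  have hlim : 1 * √(1 / 2) ^ m * ((π ^ ((m : ℝ) / 2))⁻¹ * S.det ^ (-(1 : ℝ) / 2)) *
      Real.exp (-(1 / 2) * mahalanobis m S a x) = gaussPdf m a S x := by
    have e : (2 * π) ^ (-(m : ℝ) / 2) = √(1 / 2) ^ m * (π ^ ((m : ℝ) / 2))⁻¹ := by
      rw [neg_div, Real.rpow_neg (by positivity), Real.mul_rpow (by norm_num) pi_pos.le, mul_inv,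
        Real.rpow_div_two_eq_sqrt (m : ℝ) (by norm_num : (0 : ℝ) ≤ 2), Real.rpow_natCast,
        one_div, Real.sqrt_inv, inv_pow]
    rw [gaussPdf, e]
    ring
  rw [hlim] at h
  refine h.congr' ?_
  filter_upwards [eventually_gt_atTop 0] with γ hγ
  have hc : 0 < (m : ℝ) + 2 * γ + 2 := by positivity
  have hy : 0 < γ + 1 := by linarith
  have hs : 0 < √(γ + 1) := Real.sqrt_pos.2 hy
  have hdet : (((m : ℝ) + 2 * γ + 2) • S).det ^ (-(1 : ℝ) / 2) =
      (√((m : ℝ) + 2 * γ + 2) ^ m)⁻¹ * S.det ^ (-(1 : ℝ) / 2) := by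
    rw [Matrix.det_smul, Fintype.card_fin, Real.mul_rpow (by positivity) hS.det_pos.le, neg_div,
      Real.rpow_neg (by positivity), ← Real.sqrt_eq_rpow, Real.sqrt_eq_rpow,
      Real.sqrt_eq_rpow, ← Real.rpow_natCast, ← Real.rpow_natCast, ← Real.rpow_mul hc.le,
      ← Real.rpow_mul hc.le, mul_comm (m : ℝ)]
  have hG := Real.Gamma_pos_of_pos hy
  rw [pearsonPdf, pearsonConst, mahalanobis_smul m S hS a x hc.ne', hdet, Function.comp_apply,
    Real.sqrt_div hy.le, div_pow, show (m : ℝ) / 2 + γ + 1 = γ + 1 + m / 2 by ring]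
  congr 1
  have hsc : 0 < √((m : ℝ) + 2 * γ + 2) := Real.sqrt_pos.2 hc
  have hpi : 0 < π ^ ((m : ℝ) / 2) := by positivity
  generalize S.det ^ (-(1 : ℝ) / 2) = D
  generalize √((m : ℝ) + 2 * γ + 2) = E at *
  field_simp
end
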